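/- Let G be a discrete group and let ∂_F G be a Furstenberg boundary of G. The action of G on ∂_F G is free (i.e., sx = x for some x ∈ ∂_F G implies s = e) if and only if the only G-equivariant u.c.p. map Φ : C*_λ(G) → C(∂_F G) is the map given by Φ(a) = τ_λ(a)·1 for all a ∈ C*_λ(G). -/

import Mathlib

noncomputable section
open scoped ENNReal ComplexOrder lp
open MeasureTheory
set_option maxHeartbeats 1000000
set_option synthInstance.maxHeartbeats 1000000

universe u

variable {G : Type u} [Group G]

theorem translat_mem (g : G) (f : ℓ²(G, ℂ)) : Memℓp (fun h => f (g⁻¹ * h)) 2 := by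
  have hf : Summable fun i : G => ‖f i‖ ^ (2 : ℝ≥0∞).toReal :=
    (memℓp_gen_iff (by norm_num)).1 (lp.memℓp f)
  exact memℓp_gen ((Equiv.mulLeft g⁻¹).summable_iff.2 hf)

/-- The left regular representation of `g ∈ G` as a linear isometric bijection of `ℓ²(G)`,
given by `(λ_g ξ)(h) = ξ(g⁻¹ h)`. -/
def lregE (g : G) : ℓ²(G, ℂ) ≃ₗᵢ[ℂ] ℓ²(G, ℂ) :=
{ toFun := fun f => ⟨fun h => f (g⁻¹ * h), translat_mem g f⟩
  invFun := fun f => ⟨fun h => f (g * h), by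
    have := translat_mem g⁻¹ f; simp only [inv_inv] at this; exact this⟩
  map_add' := by intro f₁ f₂; ext h; simp [lp.coeFn_add]; rfl
  map_smul' := by intro c f; ext h; simp [lp.coeFn_smul]
  left_inv := by intro f; ext h; simp
  right_inv := by intro f; ext h; simp
  norm_map' := by
    intro f
    rw [lp.norm_eq_tsum_rpow (by norm_num) f, lp.norm_eq_tsum_rpow (by norm_num)]
    congr 1
    exact (Equiv.mulLeft g⁻¹).tsum_eq (fun h => ‖f h‖ ^ (2 : ℝ≥0∞).toReal) }

/-- The left regular representation `λ` as bounded operators on `ℓ²(G)`. -/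
def lreg (g : G) : ℓ²(G, ℂ) →L[ℂ] ℓ²(G, ℂ) :=
  (lregE g).toContinuousLinearEquiv.toContinuousLinearMap

variable (G) in
/-- The reduced group C*-algebra `C*_λ(G)`: the norm-closed star subalgebra of the algebra of
bounded operators on `ℓ²(G)` generated by the image of the left regular representation. -/
def redCstar : StarSubalgebra ℂ (ℓ²(G, ℂ) →L[ℂ] ℓ²(G, ℂ)) :=
  (StarAlgebra.adjoin ℂ (Set.range (lreg (G := G)))).topologicalClosure

/-- `λ_g` as an element of the reduced group C*-algebra. -/
def uu (g : G) : redCstar G :=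
  ⟨lreg g, StarSubalgebra.le_topologicalClosure _ (StarAlgebra.subset_adjoin ℂ _ ⟨g, rfl⟩)⟩

/-- The vector `δ_e ∈ ℓ²(G)`. -/
def deltaOne : ℓ²(G, ℂ) := letI := Classical.decEq G; lp.single 2 (1 : G) 1

variable (G) in
/-- The canonical tracial state `τ_λ(a) = ⟨a δ_e, δ_e⟩` on the reduced C*-algebra
(as a scalar-valued function). -/
def tauF (a : redCstar G) : ℂ :=
  inner (𝕜 := ℂ) (deltaOne (G := G)) ((a : ℓ²(G, ℂ) →L[ℂ] ℓ²(G, ℂ)) (deltaOne (G := G)))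

attribute [irreducible] redCstar lreg lregE deltaOne uu tauF

/-- `X` is a `G`-boundary: a nonempty compact Hausdorff `G`-space such that for every regular
Borel probability measure `μ` on `X` and every `x ∈ X`, the point mass `δ_x` lies in the
weak* closure of the orbit `Gμ`. -/
def IsBoundary (G X : Type*) [Group G] [TopologicalSpace X] [CompactSpace X] [T2Space X]
    [MulAction G X] [ContinuousConstSMul G X] : Prop :=
  Nonempty X ∧
  letI : MeasurableSpace X := borel X
  haveI : BorelSpace X := ⟨rfl⟩
  ∀ (μ : ProbabilityMeasure X) (x : X),
    (⟨Measure.dirac x, Measure.dirac.isProbabilityMeasure⟩ : ProbabilityMeasure X) ∈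
      closure {ν : ProbabilityMeasure X |
        ∃ g : G, ν = μ.map ((continuous_const_smul g).measurable.aemeasurable (μ := μ.toMeasure))
          (f := (g • ·))}

/-- `Y` is a Furstenberg boundary of `G`: a `G`-boundary admitting a continuous `G`-equivariant
surjection onto every `G`-boundary. -/
def IsFurstenberg (G Y : Type u) [Group G] [TopologicalSpace Y] [CompactSpace Y] [T2Space Y]
    [MulAction G Y] [ContinuousConstSMul G Y] : Prop :=
  IsBoundary G Y ∧
  ∀ (X : Type u) (iT : TopologicalSpace X) (iC : @CompactSpace X iT) (iH : @T2Space X iT)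
    (iM : MulAction G X) (iS : @ContinuousConstSMul G X iT iM.toSMul),
    @IsBoundary G X _ iT iC iH iM iS →
      ∃ q : Y → X, @Continuous _ _ _ iT q ∧ Function.Surjective q ∧
        ∀ (g : G) (y : Y), q (g • y) = g • q y

/-- A linear map into `C(Y, ℂ)` is unital completely positive: it is unital and its entrywise
extensions to matrix algebras map positive elements to positive elements. -/
def IsUCP {Y : Type u} [TopologicalSpace Y] (Φ : redCstar G →L[ℂ] C(Y, ℂ)) : Prop :=
  Φ 1 = 1 ∧ ∀ (n : ℕ) (M : Matrix (Fin n) (Fin n) (redCstar G)),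
    (∃ N : Matrix (Fin n) (Fin n) (redCstar G), M = star N * N) →
      ∃ P : Matrix (Fin n) (Fin n) C(Y, ℂ), M.map Φ = star P * P

/-- `G`-equivariance of a map `C*_λ(G) → C(Y)`, for the conjugation action on `C*_λ(G)` and
the translation action on `C(Y)`: `Φ(λ_g a λ_g⁻¹)(y) = Φ(a)(g⁻¹ y)`. -/
def IsEquivariant {Y : Type u} [TopologicalSpace Y] [MulAction G Y]
    (Φ : redCstar G →L[ℂ] C(Y, ℂ)) : Prop :=
  ∀ (g : G) (a : redCstar G) (y : Y), Φ (uu g * a * uu g⁻¹) y = Φ a (g⁻¹ • y)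

/-!
Free implies unique: extend `ev_w ∘ Φ` to a state on `B(ℓ²(G))`. Its restriction to the
multiplication operators `M_f`, `f ∈ C(Y)`, is a probability measure on the boundary `Y`, whose
translates accumulate at point masses. A limit of conjugates of the state is therefore a state that
restricts to a point mass on the `M_f` and is still given by `Φ` on the reduced C*-algebra.
It is multiplicative on the `M_f`, so it must kill `λ_s` as soon as `s` moves the point.

Unique implies free: a minimal invariant compact convex set of means on `G` has a boundary as the
closure of its extreme points, so the Furstenberg boundary carries a continuous equivariant family
of means `q_y`. By rigidity `q_y (t ↦ f (t • x)) = f y`; this makes `Y` extremally disconnected, so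
that fixed-point sets are clopen (Frolík). The mean `q_x` is invariant under the stabilizer of `x`,
which yields a state `φ` equal to `1` on every `λ_t` with `t` in that stabilizer. Averaging the
conjugates of `φ` along the family `q` gives an equivariant u.c.p. map that differs from the trace
as soon as some nontrivial element fixes `x`.
-/

open Filter Topology Set BoundedContinuousFunction

section States

variable {S T : Type*} [TopologicalSpace S] [TopologicalSpace T]

variable (S) in
/-- The states of `C_b(S)`: unital positive functionals, as a subset of the weak* dual. It is used
both for compact `S`, where states are the regular Borel probability measures, and for a discrete
group, where they are the means on `ℓ^∞`. -/
def stateSpace : Set (WeakDual ℝ (S →ᵇ ℝ)) :=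
  {θ | θ 1 = 1 ∧ ∀ f : S →ᵇ ℝ, 0 ≤ f → 0 ≤ θ f}

/-- The point evaluation `δ_x` as a state of `C_b(S)`. -/
def diracState (x : S) : WeakDual ℝ (S →ᵇ ℝ) :=
  StrongDual.toWeakDual (evalCLM ℝ x)

/-- Composition with a continuous map `φ : S → T`, as a bounded operator `C_b(T) → C_b(S)`. -/
def pullback (φ : C(S, T)) : (T →ᵇ ℝ) →L[ℝ] (S →ᵇ ℝ) :=
  LinearMap.mkContinuous (σ := RingHom.id ℝ)
    { toFun := fun f => f.compContinuous φ
      map_add' := fun _ _ => rfl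
      map_smul' := fun _ _ => rfl } 1
    fun f => (norm_le (by positivity)).2 fun x => (one_mul ‖f‖).symm ▸ f.norm_coe_le_norm (φ x)

/-- The weak* continuous adjoint of `pullback φ`, in the direction of the push-forward of
measures. -/
def pushforward (φ : C(S, T)) : WeakDual ℝ (S →ᵇ ℝ) →L[ℝ] WeakDual ℝ (T →ᵇ ℝ) where
  toFun θ := StrongDual.toWeakDual ((WeakDual.toStrongDual θ).comp (pullback φ))
  map_add' _ _ := rfl
  map_smul' _ _ := rfl
  cont := WeakDual.continuous_of_continuous_eval fun f =>
    WeakDual.eval_continuous (pullback φ f)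

theorem continuous_diracState : Continuous (diracState : S → WeakDual ℝ (S →ᵇ ℝ)) :=
  WeakDual.continuous_of_continuous_eval fun f => f.continuous

theorem diracState_mem_stateSpace (x : S) : diracState x ∈ stateSpace S :=
  ⟨rfl, fun _ hf => hf x⟩

theorem pushforward_mem_stateSpace (φ : C(S, T)) {θ : WeakDual ℝ (S →ᵇ ℝ)}
    (hθ : θ ∈ stateSpace S) : pushforward φ θ ∈ stateSpace T :=
  ⟨hθ.1, fun f hf => hθ.2 (f.compContinuous φ) fun x => hf (φ x)⟩

theorem diracState_injective [CompactSpace S] [T2Space S] :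
    Function.Injective (diracState : S → WeakDual ℝ (S →ᵇ ℝ)) := by
  intro x y hxy
  by_contra hne
  obtain ⟨f, hfx, hfy, -⟩ := exists_continuous_zero_one_of_isClosed
    (isClosed_singleton (x := x)) (isClosed_singleton (x := y)) (by simpa using hne)
  have h : f x = f y := DFunLike.congr_fun hxy (mkOfCompact f)
  simp [hfx rfl, hfy rfl] at h

theorem state_mono {θ : WeakDual ℝ (S →ᵇ ℝ)} (hθ : θ ∈ stateSpace S) {f g : S →ᵇ ℝ}
    (hfg : f ≤ g) : θ f ≤ θ g :=
  sub_nonneg.1 <| map_sub θ g f ▸ hθ.2 _ (sub_nonneg.2 hfg)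

theorem state_const {θ : WeakDual ℝ (S →ᵇ ℝ)} (hθ : θ ∈ stateSpace S) (c : ℝ) :
    θ (const S c) = c := by
  have : const S c = c • (1 : S →ᵇ ℝ) := by ext; simp
  rw [this, map_smul, hθ.1, smul_eq_mul, mul_one]

theorem state_le_of_le {θ : WeakDual ℝ (S →ᵇ ℝ)} (hθ : θ ∈ stateSpace S) {f : S →ᵇ ℝ} {c : ℝ}
    (hf : ∀ x, f x ≤ c) : θ f ≤ c :=
  (state_mono hθ (show f ≤ const S c from hf)).trans_eq (state_const hθ c)

theorem le_state_of_le {θ : WeakDual ℝ (S →ᵇ ℝ)} (hθ : θ ∈ stateSpace S) {f : S →ᵇ ℝ} {c : ℝ}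
    (hf : ∀ x, c ≤ f x) : c ≤ θ f :=
  (state_const hθ c).symm.trans_le (state_mono hθ (show const S c ≤ f from hf))

theorem abs_state_apply_le {θ : WeakDual ℝ (S →ᵇ ℝ)} (hθ : θ ∈ stateSpace S) (f : S →ᵇ ℝ) :
    |θ f| ≤ ‖f‖ :=
  abs_le.2 ⟨le_state_of_le hθ f.neg_norm_le_apply, state_le_of_le hθ f.apply_le_norm⟩

theorem convex_stateSpace : Convex ℝ (stateSpace S) := by
  rintro θ ⟨hθ, hθ'⟩ η ⟨hη, hη'⟩ a b ha hb hab
  refine ⟨?_, fun f hf => ?_⟩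
  · change a * θ 1 + b * η 1 = 1
    rw [hθ, hη, mul_one, mul_one, hab]
  · exact add_nonneg (mul_nonneg ha (hθ' f hf)) (mul_nonneg hb (hη' f hf))

theorem isClosed_stateSpace : IsClosed (stateSpace S) := by
  simp only [stateSpace, ofPred_and, ofPred_forall]
  exact (isClosed_eq (WeakDual.eval_continuous 1) continuous_const).inter <|
    isClosed_iInter fun f => isClosed_iInter fun _ =>
      isClosed_le continuous_const (WeakDual.eval_continuous f)

theorem isCompact_stateSpace : IsCompact (stateSpace S) := by
  refine (WeakDual.isCompact_closedBall (0 : StrongDual ℝ (S →ᵇ ℝ)) 1).of_isClosed_subset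
    isClosed_stateSpace fun θ hθ => ?_
  rw [mem_preimage, mem_closedBall_zero_iff]
  exact ContinuousLinearMap.opNorm_le_bound _ zero_le_one fun f =>
    (abs_state_apply_le hθ f).trans_eq (one_mul _).symm

theorem eq_diracState_of_forall_eq_zero {θ : WeakDual ℝ (S →ᵇ ℝ)} (hθ : θ ∈ stateSpace S) {x : S}
    (h : ∀ f : S →ᵇ ℝ, 0 ≤ f → f x = 0 → θ f = 0) : θ = diracState x := by
  refine DFunLike.ext _ _ fun f => ?_
  have key : θ |f - const S (f x)| = 0 := h _ (abs_nonneg _) (by simp)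
  have hle : |θ (f - const S (f x))| ≤ 0 := abs_le'.2
    ⟨key ▸ state_mono hθ (le_abs_self _), key ▸ map_neg θ _ ▸ state_mono hθ (neg_le_abs _)⟩
  rw [abs_nonpos_iff, map_sub, state_const hθ, sub_eq_zero] at hle
  exact hle

theorem diracState_mem_extremePoints (x : S) :
    diracState x ∈ extremePoints ℝ (stateSpace S) := by
  refine ⟨diracState_mem_stateSpace x, fun θ hθ η hη ⟨a, b, ha, hb, _, hab⟩ => ?_⟩
  refine eq_diracState_of_forall_eq_zero hθ fun f hf hfx => ?_
  have hsum : a * θ f + b * η f = 0 := hfx ▸ DFunLike.congr_fun hab f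
  have hη0 := mul_nonneg hb.le (hη.2 f hf)
  exact le_antisymm (nonpos_of_mul_nonpos_right (by linarith) ha) (hθ.2 f hf)

instance locallyConvexSpace_weakDual (V : Type*) [AddCommGroup V] [TopologicalSpace V]
    [Module ℝ V] : LocallyConvexSpace ℝ (WeakDual ℝ V) :=
  inferInstanceAs (LocallyConvexSpace ℝ (WeakBilin (topDualPairing ℝ V)))

theorem exists_eval_eq_of_weakDual {V : Type*} [AddCommGroup V] [TopologicalSpace V]
    [Module ℝ V] (ℓ : WeakDual ℝ V →L[ℝ] ℝ) : ∃ v : V, ∀ θ : WeakDual ℝ V, ℓ θ = θ v := by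
  obtain ⟨v, hv⟩ := LinearMap.dualEmbedding_surjective (topDualPairing ℝ V) ℓ
  exact ⟨v, fun θ => (DFunLike.congr_fun hv θ).symm⟩

theorem stateSpace_subset_closure_convexHull_range_diracState :
    stateSpace S ⊆ closure (convexHull ℝ (range diracState)) := by
  intro θ hθ
  by_contra hnot
  obtain ⟨ℓ, c, hℓ, hc⟩ := geometric_hahn_banach_closed_point
    (convex_convexHull ℝ (range diracState)).closure isClosed_closure hnot
  obtain ⟨f, hf⟩ := exists_eval_eq_of_weakDual ℓ
  have hfc : ∀ x, f x ≤ c := fun x =>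
    hf (diracState x) ▸ (hℓ _ (subset_closure (subset_convexHull ℝ _ ⟨x, rfl⟩))).le
  exact (state_le_of_le hθ hfc).not_gt (hf θ ▸ hc)

end States

section Barycenters

theorem state_eq_zero_of_null_family {S : Type*} [TopologicalSpace S] [CompactSpace S]
    {θ : WeakDual ℝ (S →ᵇ ℝ)} (hθ : θ ∈ stateSpace S) {P : Set (S →ᵇ ℝ)}
    (hP : ∀ p ∈ P, 0 ≤ p ∧ θ p = 0) {f : S →ᵇ ℝ} (hf : 0 ≤ f)
    (hzero : ∀ s, (∀ p ∈ P, p s = 0) → f s = 0) : θ f = 0 := by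
  refine le_antisymm (le_of_forall_pos_le_add fun ε hε => ?_) (hθ.2 f hf)
  suffices h : ∃ p : S →ᵇ ℝ, 0 ≤ p ∧ θ p = 0 ∧ ∀ s ∈ univ, f s ≤ p s + ε by
    obtain ⟨p, -, hθp, hfp⟩ := h
    have hle : f ≤ p + const S ε := fun s => hfp s (mem_univ s)
    calc θ f ≤ θ (p + const S ε) := state_mono hθ hle
      _ = 0 + ε := by rw [map_add, hθp, state_const hθ]
  refine isCompact_univ.induction_on ⟨0, le_rfl, map_zero θ, fun s hs => hs.elim⟩
    (fun A B hAB ⟨p, hp, hθp, hB⟩ => ⟨p, hp, hθp, fun s hs => hB s (hAB hs)⟩)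
    (fun A B ⟨p, hp, hθp, hA⟩ ⟨q, hq, hθq, hB⟩ => ?_) fun s _ => ?_
  · refine ⟨p + q, add_nonneg hp hq, by rw [map_add, hθp, hθq, add_zero], fun s hs => ?_⟩
    have hps : 0 ≤ p s := hp s
    have hqs : 0 ≤ q s := hq s
    rw [BoundedContinuousFunction.add_apply]
    rcases hs with hs | hs
    · linarith [hA s hs]
    · linarith [hB s hs]
  · suffices h : ∃ p : S →ᵇ ℝ, 0 ≤ p ∧ θ p = 0 ∧ f s < p s + ε by
      obtain ⟨p, hp, hθp, hs⟩ := h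
      exact ⟨{t | f t < p t + ε}, mem_nhdsWithin_of_mem_nhds <|
        (isOpen_lt f.continuous (p.continuous.add continuous_const)).mem_nhds hs,
        p, hp, hθp, fun t ht => ht.le⟩
    by_cases hs : ∀ p ∈ P, p s = 0
    · exact ⟨0, le_rfl, map_zero θ, by simpa [hzero s hs] using hε⟩
    · push Not at hs
      obtain ⟨p, hpP, hps⟩ := hs
      have hps0 : 0 ≤ p s := (hP p hpP).1 s
      refine ⟨(f s / p s) • p, fun t => mul_nonneg (div_nonneg (hf s) hps0) ((hP p hpP).1 t),
        by rw [map_smul, (hP p hpP).2, smul_zero], ?_⟩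
      rw [BoundedContinuousFunction.smul_apply, smul_eq_mul, div_mul_cancel₀ _ hps]
      exact lt_add_of_pos_right _ hε

/-- The state `f ↦ θ(hf)/θ(h)` with density proportional to `h`. -/
def tiltedState {S : Type*} [TopologicalSpace S] (θ : WeakDual ℝ (S →ᵇ ℝ)) (h : S →ᵇ ℝ) :
    WeakDual ℝ (S →ᵇ ℝ) :=
  StrongDual.toWeakDual <|
    (θ h)⁻¹ • (WeakDual.toStrongDual θ).comp (ContinuousLinearMap.mul ℝ (S →ᵇ ℝ) h)

theorem tiltedState_apply {S : Type*} [TopologicalSpace S] (θ : WeakDual ℝ (S →ᵇ ℝ))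
    (h f : S →ᵇ ℝ) : tiltedState θ h f = (θ h)⁻¹ * θ (h * f) := rfl

theorem tiltedState_mem_stateSpace {S : Type*} [TopologicalSpace S] {θ : WeakDual ℝ (S →ᵇ ℝ)}
    (hθ : θ ∈ stateSpace S) {h : S →ᵇ ℝ} (hh : 0 ≤ h) (hpos : 0 < θ h) :
    tiltedState θ h ∈ stateSpace S := by
  refine ⟨?_, fun f hf => ?_⟩
  · rw [tiltedState_apply, mul_one, inv_mul_cancel₀ hpos.ne']
  · exact mul_nonneg (inv_nonneg.2 hpos.le) (hθ.2 _ fun s => mul_nonneg (hh s) (hf s))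

variable {S : Type*} [TopologicalSpace S] [CompactSpace S]
  {E : Type*} [AddCommGroup E] [Module ℝ E] [TopologicalSpace E]

/-- The restriction of a continuous linear functional along a map from a compact space. -/
def restrictDual (i : C(S, E)) (ℓ : E →L[ℝ] ℝ) : S →ᵇ ℝ :=
  mkOfCompact ⟨fun s => ℓ (i s), ℓ.continuous.comp i.continuous⟩

@[simp]
theorem restrictDual_apply (i : C(S, E)) (ℓ : E →L[ℝ] ℝ) (s : S) :
    restrictDual i ℓ s = ℓ (i s) := rfl

/-- `b` is the barycenter, or resultant, of the push-forward along `i` of the probability measure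
corresponding to the state `θ`. -/
def IsBarycenter (i : C(S, E)) (θ : WeakDual ℝ (S →ᵇ ℝ)) (b : E) : Prop :=
  ∀ ℓ : E →L[ℝ] ℝ, θ (restrictDual i ℓ) = ℓ b

theorem isBarycenter_diracState (i : C(S, E)) (s : S) : IsBarycenter i (diracState s) (i s) :=
  fun _ => rfl

theorem IsBarycenter.combo {i : C(S, E)} {θ η : WeakDual ℝ (S →ᵇ ℝ)} {b c : E}
    (hθ : IsBarycenter i θ b) (hη : IsBarycenter i η c) (s t : ℝ) :
    IsBarycenter i (s • θ + t • η) (s • b + t • c) := fun ℓ => by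
  rw [map_add, map_smul, map_smul, ← hθ ℓ, ← hη ℓ]
  rfl

theorem isClosed_setOf_isBarycenter (i : C(S, E)) :
    IsClosed {p : WeakDual ℝ (S →ᵇ ℝ) × E | IsBarycenter i p.1 p.2} := by
  simp only [IsBarycenter, ofPred_forall]
  exact isClosed_iInter fun ℓ => isClosed_eq
    ((WeakDual.eval_continuous _).comp continuous_fst) (ℓ.continuous.comp continuous_snd)

theorem isCompact_barycenters (i : C(S, E)) {T : Set (WeakDual ℝ (S →ᵇ ℝ))} (hT : IsCompact T)
    {K : Set E} (hK : IsCompact K) : IsCompact {b ∈ K | ∃ θ ∈ T, IsBarycenter i θ b} := by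
  convert ((hT.prod hK).inter_right (isClosed_setOf_isBarycenter i)).image continuous_snd
  ext b
  constructor
  · rintro ⟨hb, θ, hθ, h⟩
    exact ⟨(θ, b), ⟨⟨hθ, hb⟩, h⟩, rfl⟩
  · rintro ⟨⟨θ, _⟩, ⟨⟨hθ, hb⟩, h⟩, rfl⟩
    exact ⟨hb, θ, hθ, h⟩

theorem exists_isBarycenter (i : C(S, E)) {K : Set E} (hKc : IsCompact K) (hK : Convex ℝ K)
    (hi : ∀ s, i s ∈ K) {θ : WeakDual ℝ (S →ᵇ ℝ)} (hθ : θ ∈ stateSpace S) :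
    ∃ b ∈ K, IsBarycenter i θ b := by
  have hcompact : IsCompact {η ∈ stateSpace S | ∃ b ∈ K, IsBarycenter i η b} := by
    convert ((isCompact_stateSpace.prod hKc).inter_right
      (isClosed_setOf_isBarycenter i)).image continuous_fst
    ext η
    constructor
    · rintro ⟨hη, b, hb, h⟩
      exact ⟨(η, b), ⟨⟨hη, hb⟩, h⟩, rfl⟩
    · rintro ⟨⟨_, b⟩, ⟨⟨hη, hb⟩, h⟩, rfl⟩
      exact ⟨hη, b, hb, h⟩
  have hconvex : Convex ℝ {η ∈ stateSpace S | ∃ b ∈ K, IsBarycenter i η b} := by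
    rintro η ⟨hη, b, hb, h⟩ η' ⟨hη', b', hb', h'⟩ s t hs ht hst
    exact ⟨convex_stateSpace hη hη' hs ht hst, _, hK hb hb' hs ht hst, h.combo h' s t⟩
  have hdirac : range diracState ⊆ {η ∈ stateSpace S | ∃ b ∈ K, IsBarycenter i η b} :=
    range_subset_iff.2 fun s =>
      ⟨diracState_mem_stateSpace s, i s, hi s, isBarycenter_diracState i s⟩
  exact (closure_minimal (convexHull_min hdirac hconvex) hcompact.isClosed
    (stateSpace_subset_closure_convexHull_range_diracState hθ)).2

variable [T2Space E] [IsTopologicalAddGroup E] [ContinuousSMul ℝ E] [LocallyConvexSpace ℝ E]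

theorem IsBarycenter.unique {i : C(S, E)} {θ : WeakDual ℝ (S →ᵇ ℝ)} {b c : E}
    (hb : IsBarycenter i θ b) (hc : IsBarycenter i θ c) : b = c :=
  (SeparatingDual.eq_iff_forall_dual_eq (R := ℝ)).2 fun ℓ => (hb ℓ).symm.trans (hc ℓ)

-- The tilts of `θ` by `1 ± h` average to `θ`, so by extremality they have the same barycenter.
theorem state_mul_restrictDual_of_norm_lt_one {i : C(S, E)} {K : Set E} (hKc : IsCompact K)
    (hK : Convex ℝ K) (hi : ∀ s, i s ∈ K) {θ : WeakDual ℝ (S →ᵇ ℝ)} (hθ : θ ∈ stateSpace S)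
    {x : E} (hx : x ∈ extremePoints ℝ K) (hθx : IsBarycenter i θ x) {h : S →ᵇ ℝ} (hh : ‖h‖ < 1)
    (ℓ : E →L[ℝ] ℝ) : θ (h * restrictDual i ℓ) = θ h * ℓ x := by
  obtain ⟨hlow, hupp⟩ := abs_lt.1 ((abs_state_apply_le hθ h).trans_lt hh)
  have hpos : 0 < θ (1 + h) := by rw [map_add, hθ.1]; linarith
  have hneg : 0 < θ (1 - h) := by rw [map_sub, hθ.1]; linarith
  have hpos' : 0 ≤ 1 + h := fun s => by
    change 0 ≤ 1 + h s
    linarith [h.neg_norm_le_apply s]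
  have hneg' : 0 ≤ 1 - h := fun s => by
    change 0 ≤ 1 - h s
    linarith [h.apply_le_norm s]
  obtain ⟨b, hb, hθb⟩ := exists_isBarycenter i hKc hK hi (tiltedState_mem_stateSpace hθ hpos' hpos)
  obtain ⟨c, hc, hθc⟩ := exists_isBarycenter i hKc hK hi (tiltedState_mem_stateSpace hθ hneg' hneg)
  have haverage : (θ (1 + h) / 2) • tiltedState θ (1 + h) + (θ (1 - h) / 2) •
      tiltedState θ (1 - h) = θ := DFunLike.ext _ _ fun f => by
    change θ (1 + h) / 2 * ((θ (1 + h))⁻¹ * θ ((1 + h) * f)) +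
      θ (1 - h) / 2 * ((θ (1 - h))⁻¹ * θ ((1 - h) * f)) = θ f
    have hsum : θ ((1 + h) * f) + θ ((1 - h) * f) = 2 * θ f := by
      rw [← map_add, ← add_mul, add_add_sub_cancel, add_mul, one_mul, map_add, two_mul]
    field_simp
    linarith
  have hseg : x ∈ openSegment ℝ b c :=
    ⟨θ (1 + h) / 2, θ (1 - h) / 2, half_pos hpos, half_pos hneg,
      by rw [map_add, map_sub, hθ.1]; ring,
      (haverage ▸ hθb.combo hθc (θ (1 + h) / 2) (θ (1 - h) / 2) :).unique hθx⟩
  have htilt := hθb ℓ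
  rw [hx.2 hb hc hseg, tiltedState_apply, inv_mul_eq_iff_eq_mul₀ hpos.ne', add_mul, one_mul,
    map_add, map_add, hθ.1, hθx ℓ, add_mul, one_mul] at htilt
  exact add_left_cancel htilt

theorem state_mul_restrictDual_of_extremePoint {i : C(S, E)} {K : Set E} (hKc : IsCompact K)
    (hK : Convex ℝ K) (hi : ∀ s, i s ∈ K) {θ : WeakDual ℝ (S →ᵇ ℝ)} (hθ : θ ∈ stateSpace S)
    {x : E} (hx : x ∈ extremePoints ℝ K) (hθx : IsBarycenter i θ x) (h : S →ᵇ ℝ)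
    (ℓ : E →L[ℝ] ℝ) : θ (h * restrictDual i ℓ) = θ h * ℓ x := by
  have hc : 0 < (‖h‖ + 1)⁻¹ := by positivity
  have hscaled : ‖(‖h‖ + 1)⁻¹ • h‖ < 1 := by
    rw [norm_smul, Real.norm_of_nonneg hc.le, inv_mul_lt_one₀ (by positivity)]
    exact lt_add_one _
  have := state_mul_restrictDual_of_norm_lt_one hKc hK hi hθ hx hθx hscaled ℓ
  rw [smul_mul_assoc, map_smul, map_smul, smul_eq_mul, smul_eq_mul, mul_assoc] at this
  exact mul_left_cancel₀ hc.ne' this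

theorem state_sq_sub_eq_zero_of_extremePoint {i : C(S, E)} {K : Set E} (hKc : IsCompact K)
    (hK : Convex ℝ K) (hi : ∀ s, i s ∈ K) {θ : WeakDual ℝ (S →ᵇ ℝ)} (hθ : θ ∈ stateSpace S)
    {x : E} (hx : x ∈ extremePoints ℝ K) (hθx : IsBarycenter i θ x) (ℓ : E →L[ℝ] ℝ) :
    θ ((restrictDual i ℓ - ℓ x • 1) * (restrictDual i ℓ - ℓ x • 1)) = 0 := by
  rw [mul_sub, map_sub, state_mul_restrictDual_of_extremePoint hKc hK hi hθ hx hθx,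
    mul_smul_comm, mul_one, map_smul, smul_eq_mul, mul_comm, sub_self]

/-- **Bauer's theorem** and **Milman's theorem** in one: a state represented by an extreme point is
the Dirac state there, in particular that point lies in the range of `i`. -/
theorem exists_eq_diracState_of_extremePoint {i : C(S, E)} (hinj : Function.Injective i)
    {K : Set E} (hKc : IsCompact K) (hK : Convex ℝ K) (hi : ∀ s, i s ∈ K)
    {θ : WeakDual ℝ (S →ᵇ ℝ)} (hθ : θ ∈ stateSpace S) {x : E} (hx : x ∈ extremePoints ℝ K)
    (hθx : IsBarycenter i θ x) : ∃ s, i s = x ∧ θ = diracState s := by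
  have hnull : ∀ f : S →ᵇ ℝ, 0 ≤ f → (∀ s, i s = x → f s = 0) → θ f = 0 := fun f hf hfx => by
    refine state_eq_zero_of_null_family hθ
      (P := range fun ℓ : E →L[ℝ] ℝ =>
        (restrictDual i ℓ - ℓ x • 1) * (restrictDual i ℓ - ℓ x • 1)) ?_ hf fun s hs => ?_
    · rintro _ ⟨ℓ, rfl⟩
      exact ⟨fun s => mul_self_nonneg _,
        state_sq_sub_eq_zero_of_extremePoint hKc hK hi hθ hx hθx ℓ⟩
    · refine hfx s ((SeparatingDual.eq_iff_forall_dual_eq (R := ℝ)).2 fun ℓ => ?_)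
      simpa [sub_eq_zero] using hs _ ⟨ℓ, rfl⟩
  obtain ⟨s, hs⟩ : ∃ s, i s = x := by
    by_contra! hne
    exact one_ne_zero (hθ.1.symm.trans (hnull 1 (fun _ => zero_le_one) fun s hs => (hne s hs).elim))
  refine ⟨s, hs, eq_diracState_of_forall_eq_zero hθ fun f hf hfs => hnull f hf fun t ht => ?_⟩
  rwa [hinj (ht.trans hs.symm)]

theorem mem_of_mem_extremePoints_closure_convexHull {N : Set E} (hN : IsCompact N)
    (hK : IsCompact (closure (convexHull ℝ N))) {x : E}
    (hx : x ∈ extremePoints ℝ (closure (convexHull ℝ N))) : x ∈ N := by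
  have := isCompact_iff_compactSpace.1 hN
  have hKconv : Convex ℝ (closure (convexHull ℝ N)) := (convex_convexHull ℝ N).closure
  let i : C(N, E) := ⟨Subtype.val, continuous_subtype_val⟩
  have hi : ∀ s : N, i s ∈ closure (convexHull ℝ N) := fun s =>
    subset_closure (subset_convexHull ℝ N s.2)
  have hconvex : Convex ℝ
      {b ∈ closure (convexHull ℝ N) | ∃ θ ∈ stateSpace N, IsBarycenter i θ b} := by
    rintro b ⟨hb, θ, hθ, h⟩ c ⟨hc, η, hη, h'⟩ s t hs ht hst
    exact ⟨hKconv hb hc hs ht hst, _, convex_stateSpace hθ hη hs ht hst, h.combo h' s t⟩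
  have hN' : N ⊆ {b ∈ closure (convexHull ℝ N) | ∃ θ ∈ stateSpace N, IsBarycenter i θ b} :=
    fun s hs => ⟨hi ⟨s, hs⟩, diracState ⟨s, hs⟩, diracState_mem_stateSpace _,
      isBarycenter_diracState i ⟨s, hs⟩⟩
  obtain ⟨-, θ, hθ, hθx⟩ := closure_minimal (convexHull_min hN' hconvex)
    (isCompact_barycenters i isCompact_stateSpace hK).isClosed hx.1
  obtain ⟨s, hs, -⟩ :=
    exists_eq_diracState_of_extremePoint Subtype.val_injective hK hKconv hi hθ hx hθx
  exact hs ▸ s.2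

end Barycenters

section ProbabilityMeasures

variable {X : Type*} [TopologicalSpace X] [MeasurableSpace X] [BorelSpace X]

/-- The state of `C_b(X)` given by integration against a probability measure. -/
def integralState (μ : ProbabilityMeasure X) : WeakDual ℝ (X →ᵇ ℝ) :=
  StrongDual.toWeakDual <| LinearMap.mkContinuous (σ := RingHom.id ℝ)
    { toFun := fun f => ∫ x, f x ∂(μ : Measure X)
      map_add' := fun f g => integral_add (f.integrable _) (g.integrable _)
      map_smul' := fun c f => integral_const_mul c f } 1
    fun f => (f.norm_integral_le_norm _).trans_eq (one_mul _).symm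

@[simp]
theorem integralState_apply (μ : ProbabilityMeasure X) (f : X →ᵇ ℝ) :
    integralState μ f = ∫ x, f x ∂(μ : Measure X) := rfl

theorem integralState_mem_stateSpace (μ : ProbabilityMeasure X) :
    integralState μ ∈ stateSpace X :=
  ⟨by simp, fun _ hf => integral_nonneg hf⟩

theorem isInducing_integralState :
    IsInducing (integralState : ProbabilityMeasure X → WeakDual ℝ (X →ᵇ ℝ)) := by
  refine isInducing_iff_nhds.2 fun μ => le_antisymm ?_ fun s hs => ?_
  · refine tendsto_iff_comap.1 ((WeakDual.continuous_of_continuous_eval fun f => ?_).tendsto μ)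
    exact continuous_iff_continuousAt.2 fun ν =>
      ProbabilityMeasure.tendsto_iff_forall_integral_tendsto.1 tendsto_id f
  · have h : Tendsto id (comap integralState (𝓝 (integralState μ))) (𝓝 μ) :=
      ProbabilityMeasure.tendsto_iff_forall_integral_tendsto.2 fun f =>
        ((WeakDual.eval_continuous f).tendsto _).comp tendsto_comap
    exact h hs

theorem mem_closure_iff_integralState_mem_closure {ν : ProbabilityMeasure X}
    {A : Set (ProbabilityMeasure X)} :
    ν ∈ closure A ↔ integralState ν ∈ closure (integralState '' A) := by
  rw [isInducing_integralState.closure_eq_preimage_closure_image, mem_preimage]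

theorem exists_integralState_eq [CompactSpace X] [T2Space X] {θ : WeakDual ℝ (X →ᵇ ℝ)}
    (hθ : θ ∈ stateSpace X) : ∃ μ : ProbabilityMeasure X, integralState μ = θ := by
  let Λ : CompactlySupportedContinuousMap X ℝ →ₚ[ℝ] ℝ := PositiveLinearMap.mk₀
    { toFun := fun f => θ (mkOfCompact f.toContinuousMap)
      map_add' := fun f g => map_add θ (mkOfCompact f.toContinuousMap) (mkOfCompact g)
      map_smul' := fun c f => map_smul θ c (mkOfCompact f.toContinuousMap) }
    fun f hf => hθ.2 _ hf
  have hΛ : ∀ f : X →ᵇ ℝ, ∫ x, f x ∂(RealRMK.rieszMeasure Λ) = θ f := fun f =>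
    RealRMK.integral_rieszMeasure Λ
      (CompactlySupportedContinuousMap.continuousMapEquiv f.toContinuousMap)
  have hreal : (RealRMK.rieszMeasure Λ).real univ = 1 := by
    simpa [hθ.1] using hΛ 1
  have hprob : IsProbabilityMeasure (RealRMK.rieszMeasure Λ) :=
    ⟨(ENNReal.toReal_eq_one_iff _).1 hreal⟩
  exact ⟨⟨_, hprob⟩, DFunLike.ext _ _ hΛ⟩

end ProbabilityMeasures

section Boundaries

/-- The homeomorphism `x ↦ g • x` as a bundled continuous map. -/
def translation {S : Type*} [TopologicalSpace S] [MulAction G S] [ContinuousConstSMul G S]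
    (g : G) : C(S, S) :=
  ⟨(g • ·), continuous_const_smul g⟩

/-- The action of `G` on the weak* dual of `C_b(S)` that extends the action on point masses. -/
def stateRep (G S : Type*) [Group G] [TopologicalSpace S] [MulAction G S]
    [ContinuousConstSMul G S] : G →* (WeakDual ℝ (S →ᵇ ℝ) →L[ℝ] WeakDual ℝ (S →ᵇ ℝ)) where
  toFun g := pushforward (translation g)
  map_one' := by
    refine ContinuousLinearMap.ext fun θ => DFunLike.ext _ _ fun f => congrArg θ ?_
    exact BoundedContinuousFunction.ext fun s => congrArg f (one_smul G s)
  map_mul' g h := by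
    refine ContinuousLinearMap.ext fun θ => DFunLike.ext _ _ fun f => congrArg θ ?_
    exact BoundedContinuousFunction.ext fun s => congrArg f (mul_smul g h s)

variable {S : Type*} [TopologicalSpace S] [MulAction G S] [ContinuousConstSMul G S]

theorem stateRep_apply (g : G) (θ : WeakDual ℝ (S →ᵇ ℝ)) (f : S →ᵇ ℝ) :
    stateRep G S g θ f = θ (f.compContinuous (translation g)) := rfl

theorem stateRep_diracState (g : G) (x : S) :
    stateRep G S g (diracState x) = diracState (g • x) := rfl

theorem stateRep_mem_stateSpace (g : G) {θ : WeakDual ℝ (S →ᵇ ℝ)} (hθ : θ ∈ stateSpace S) :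
    stateRep G S g θ ∈ stateSpace S :=
  pushforward_mem_stateSpace _ hθ

variable {X : Type*} [TopologicalSpace X] [CompactSpace X] [T2Space X] [MulAction G X]
  [ContinuousConstSMul G X]

theorem isBoundary_iff : IsBoundary G X ↔ Nonempty X ∧
    ∀ θ ∈ stateSpace X, ∀ x : X, diracState x ∈ closure (range fun g => stateRep G X g θ) := by
  refine and_congr_right fun _ => ?_
  borelize X
  have hclosure : ∀ (μ : ProbabilityMeasure X) (x : X),
      (⟨Measure.dirac x, Measure.dirac.isProbabilityMeasure⟩ : ProbabilityMeasure X) ∈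
        closure {ν : ProbabilityMeasure X | ∃ g : G, ν =
          μ.map ((continuous_const_smul g).measurable.aemeasurable (μ := μ.toMeasure))
            (f := (g • ·))} ↔
      diracState x ∈ closure (range fun g => stateRep G X g (integralState μ)) := fun μ x => by
    have hdirac : integralState ⟨Measure.dirac x, Measure.dirac.isProbabilityMeasure⟩ =
        diracState x := DFunLike.ext _ _ fun f =>
      integral_dirac' _ _ f.continuous.stronglyMeasurable
    have hmap : ∀ g : G, integralState
        (μ.map ((continuous_const_smul g).measurable.aemeasurable (μ := μ.toMeasure))
          (f := (g • ·))) = stateRep G X g (integralState μ) := fun g => DFunLike.ext _ _ fun f =>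
      integral_map (continuous_const_smul g).measurable.aemeasurable
        f.continuous.stronglyMeasurable.aestronglyMeasurable
    refine mem_closure_iff_integralState_mem_closure.trans ?_
    rw [hdirac]
    refine Iff.of_eq (congrArg (diracState x ∈ closure ·) (Set.ext fun η => ⟨?_, ?_⟩))
    · rintro ⟨_, ⟨g, rfl⟩, rfl⟩
      exact ⟨g, (hmap g).symm⟩
    · rintro ⟨g, rfl⟩
      exact ⟨_, ⟨g, rfl⟩, hmap g⟩
  constructor
  · intro h θ hθ x
    obtain ⟨μ, rfl⟩ := exists_integralState_eq hθ
    exact (hclosure μ x).1 (h μ x)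
  · exact fun h μ x => (hclosure μ x).2 (h _ (integralState_mem_stateSpace μ) x)

theorem diracState_mem_closure_orbit (hX : IsBoundary G X) {θ : WeakDual ℝ (X →ᵇ ℝ)}
    (hθ : θ ∈ stateSpace X) (x : X) :
    diracState x ∈ closure (range fun g => stateRep G X g θ) :=
  (isBoundary_iff.1 hX).2 θ hθ x

theorem isMinimal_of_isBoundary (hX : IsBoundary G X) : MulAction.IsMinimal G X where
  dense_orbit x y := by
    have hclosed : IsClosed (diracState '' closure (MulAction.orbit G x)) :=
      (isClosed_closure.isCompact.image continuous_diracState).isClosed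
    have horbit : range (fun g => stateRep G X g (diracState x)) ⊆
        diracState '' closure (MulAction.orbit G x) :=
      range_subset_iff.2 fun g => ⟨g • x, subset_closure ⟨g, rfl⟩, rfl⟩
    obtain ⟨z, hz, hzy⟩ := closure_minimal horbit hclosed
      (diracState_mem_closure_orbit hX (diracState_mem_stateSpace x) y)
    exact diracState_injective hzy ▸ hz

-- `δ_x` is a limit of the translates of the average of `δ_y` and `p y`, hence itself such an
-- average, and it is extreme.
theorem eq_diracState_of_equivariant (hX : IsBoundary G X) {p : C(X, WeakDual ℝ (X →ᵇ ℝ))}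
    (hp : ∀ y, p y ∈ stateSpace X) (hsmul : ∀ (g : G) (y : X), p (g • y) = stateRep G X g (p y))
    (y : X) : p y = diracState y := by
  let average : X → WeakDual ℝ (X →ᵇ ℝ) := (2⁻¹ : ℝ) • diracState + (2⁻¹ : ℝ) • ⇑p
  have haverage : ∀ z, average z ∈ stateSpace X := fun z =>
    convex_stateSpace (diracState_mem_stateSpace z) (hp z) (by norm_num) (by norm_num) (by norm_num)
  have hcont : Continuous average :=
    (continuous_diracState.const_smul _).add (p.continuous.const_smul _)
  have hclosed : IsClosed (range average) := (isCompact_range hcont).isClosed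
  have horbit : range (fun g => stateRep G X g (average y)) ⊆ range average :=
    range_subset_iff.2 fun g => ⟨g • y, by
      simp only [average, Pi.add_apply, Pi.smul_apply, map_add, map_smul, stateRep_diracState,
        hsmul]⟩
  obtain ⟨z, hz⟩ := closure_minimal horbit hclosed
    (diracState_mem_closure_orbit hX (haverage y) y)
  have hextreme := mem_extremePoints.1 (diracState_mem_extremePoints y)
  obtain ⟨hzy, hpz⟩ := hextreme.2 _ (diracState_mem_stateSpace z) _ (hp z)
    ⟨2⁻¹, 2⁻¹, by norm_num, by norm_num, by norm_num, hz⟩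
  rwa [diracState_injective hzy] at hpz

end Boundaries

section MinimalConvexSets

variable {E : Type*} [AddCommGroup E] [Module ℝ E] [TopologicalSpace E]

/-- A nonempty compact convex set that is invariant under the linear representation `ρ`. -/
structure IsInvariantCompactConvex (ρ : G →* (E →L[ℝ] E)) (K : Set E) : Prop where
  nonempty : K.Nonempty
  isCompact : IsCompact K
  convex : Convex ℝ K
  mapsTo : ∀ g : G, MapsTo (ρ g) K K

variable {ρ : G →* (E →L[ℝ] E)} {K L N : Set E}

theorem apply_apply_inv (ρ : G →* (E →L[ℝ] E)) (g : G) (x : E) : ρ g (ρ g⁻¹ x) = x := by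
  rw [← mul_apply_eq_comp, ← map_mul, mul_inv_cancel, map_one]
  rfl

theorem IsInvariantCompactConvex.exists_minimal [T2Space E] (hK : IsInvariantCompactConvex ρ K) :
    ∃ L ⊆ K, Minimal (IsInvariantCompactConvex ρ) L := by
  refine zorn_superset_nonempty {L | IsInvariantCompactConvex ρ L}
    (fun c hc hchain hne => ?_) K hK
  have hcompact : ∀ L ∈ c, IsCompact L := fun L hL => (hc hL).isCompact
  have hclosed : ∀ L ∈ c, IsClosed L := fun L hL => (hcompact L hL).isClosed
  obtain ⟨L₀, hL₀⟩ := hne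
  refine ⟨⋂₀ c, ⟨?_, ?_, ?_, ?_⟩, fun _ => sInter_subset_of_mem⟩
  · have : Nonempty c := ⟨⟨L₀, hL₀⟩⟩
    have hdirected : DirectedOn (· ⊇ ·) c := IsChain.directedOn hchain.symm
    exact IsCompact.nonempty_sInter_of_directed_nonempty_isCompact_isClosed hdirected
      (fun L hL => (hc hL).nonempty) hcompact hclosed
  · exact (hcompact L₀ hL₀).of_isClosed_subset (isClosed_sInter hclosed) (sInter_subset_of_mem hL₀)
  · exact convex_sInter fun L hL => (hc hL).convex
  · exact fun g x hx L hL => (hc hL).mapsTo g (hx L hL)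

theorem mapsTo_extremePoints (hK : ∀ g : G, MapsTo (ρ g) K K) (g : G) :
    MapsTo (ρ g) (extremePoints ℝ K) (extremePoints ℝ K) := by
  intro x hx
  refine ⟨hK g hx.1, fun a ha b hb ⟨s, t, hs, ht, hst, hab⟩ => ?_⟩
  have hseg : x ∈ openSegment ℝ (ρ g⁻¹ a) (ρ g⁻¹ b) := by
    refine ⟨s, t, hs, ht, hst, ?_⟩
    rw [← map_smul, ← map_smul, ← map_add, hab]
    simpa using apply_apply_inv ρ g⁻¹ x
  rw [← hx.2 (hK g⁻¹ ha) (hK g⁻¹ hb) hseg, apply_apply_inv]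

theorem mapsTo_convexHull {F : Type*} [AddCommGroup F] [Module ℝ F] {f : F →ₗ[ℝ] F} {A : Set F}
    (hA : MapsTo f A A) : MapsTo f (convexHull ℝ A) (convexHull ℝ A) := by
  rw [mapsTo_iff_image_subset, f.image_convexHull]
  exact convexHull_mono hA.image_subset

theorem closure_convexHull_eq_of_minimal [T2Space E] [IsTopologicalAddGroup E]
    [ContinuousSMul ℝ E] (hL : Minimal (IsInvariantCompactConvex ρ) L) (hNL : N ⊆ L)
    (hne : N.Nonempty) (hN : ∀ g : G, MapsTo (ρ g) N N) : closure (convexHull ℝ N) = L := by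
  have hsub : closure (convexHull ℝ N) ⊆ L :=
    closure_minimal (convexHull_min hNL hL.1.convex) hL.1.isCompact.isClosed
  refine hsub.antisymm (hL.2 ⟨?_, ?_, ?_, ?_⟩ hsub)
  · exact hne.convexHull.closure
  · exact hL.1.isCompact.of_isClosed_subset isClosed_closure hsub
  · exact (convex_convexHull ℝ N).closure
  · exact fun g => (mapsTo_convexHull (f := (ρ g : E →ₗ[ℝ] E)) (hN g)).closure (ρ g).continuous

end MinimalConvexSets

section ExtremeBoundaries

variable {E : Type*} [AddCommGroup E] [Module ℝ E] [TopologicalSpace E]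
  {X : Type*} [TopologicalSpace X] [CompactSpace X] [MulAction G X] [ContinuousConstSMul G X]
  {ρ : G →* (E →L[ℝ] E)} {L : Set E} {i : C(X, E)}

theorem IsBarycenter.stateRep (hi : ∀ (g : G) (x : X), i (g • x) = ρ g (i x))
    {θ : WeakDual ℝ (X →ᵇ ℝ)} {b : E} (hθ : IsBarycenter i θ b) (g : G) :
    IsBarycenter i (stateRep G X g θ) (ρ g b) := fun ℓ =>
  calc θ ((restrictDual i ℓ).compContinuous (translation g))
      = θ (restrictDual i (ℓ.comp (ρ g))) :=
        congrArg θ (BoundedContinuousFunction.ext fun x => congrArg ℓ (hi g x))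
    _ = ℓ (ρ g b) := hθ (ℓ.comp (ρ g))

variable [T2Space E] [IsTopologicalAddGroup E] [ContinuousSMul ℝ E] [LocallyConvexSpace ℝ E]

/-- By minimality the barycenters of the closed orbit of a state of `X` span `L`, hence contain
every extreme point of `L`; a state with extreme barycenter is a point mass. -/
theorem diracState_mem_closure_orbit_of_minimal (hL : Minimal (IsInvariantCompactConvex ρ) L)
    (hinj : Function.Injective i) (hi : ∀ (g : G) (x : X), i (g • x) = ρ g (i x))
    (hiL : ∀ x, i x ∈ L) {θ : WeakDual ℝ (X →ᵇ ℝ)} (hθ : θ ∈ stateSpace X) {x : X}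
    (hx : i x ∈ extremePoints ℝ L) :
    diracState x ∈ closure (range fun g => stateRep G X g θ) := by
  set T := closure (range fun g => stateRep G X g θ)
  have hTstate : T ⊆ stateSpace X := closure_minimal
    (range_subset_iff.2 fun g => stateRep_mem_stateSpace g hθ) isClosed_stateSpace
  have hTinv : ∀ g : G, MapsTo (stateRep G X g) T T := fun g => by
    refine MapsTo.closure ?_ (stateRep G X g).continuous
    rintro _ ⟨h, rfl⟩
    exact ⟨g * h, by simp⟩
  set B := {b ∈ L | ∃ η ∈ T, IsBarycenter i η b}
  have hBinv : ∀ g : G, MapsTo (ρ g) B B := fun g b ⟨hb, η, hη, hηb⟩ =>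
    ⟨hL.1.mapsTo g hb, _, hTinv g hη, hηb.stateRep hi g⟩
  obtain ⟨b, hb, hθb⟩ := exists_isBarycenter i hL.1.isCompact hL.1.convex hiL hθ
  have hBne : B.Nonempty := ⟨b, hb, θ, subset_closure ⟨1, by simp⟩, hθb⟩
  have hBcompact : IsCompact B := isCompact_barycenters i
    (isCompact_stateSpace.of_isClosed_subset isClosed_closure hTstate) hL.1.isCompact
  have hBL : closure (convexHull ℝ B) = L :=
    closure_convexHull_eq_of_minimal hL (sep_subset _ _) hBne hBinv
  obtain ⟨-, η, hη, hηx⟩ : i x ∈ B := mem_of_mem_extremePoints_closure_convexHull hBcompact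
    (hBL ▸ hL.1.isCompact) (hBL ▸ hx)
  obtain ⟨s, hs, rfl⟩ := exists_eq_diracState_of_extremePoint hinj hL.1.isCompact hL.1.convex hiL
    (hTstate hη) hx hηx
  exact hinj hs ▸ hη

theorem isBoundary_of_range_eq_closure_extremePoints [T2Space X]
    (hL : Minimal (IsInvariantCompactConvex ρ) L) (hinj : Function.Injective i)
    (hi : ∀ (g : G) (x : X), i (g • x) = ρ g (i x))
    (hrange : range i = closure (extremePoints ℝ L)) : IsBoundary G X := by
  have hiL : ∀ x, i x ∈ L := fun x =>
    closure_minimal extremePoints_subset hL.1.isCompact.isClosed (hrange ▸ mem_range_self x)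
  refine isBoundary_iff.2 ⟨?_, fun θ hθ x => ?_⟩
  · obtain ⟨z, hz⟩ := hL.1.isCompact.extremePoints_nonempty hL.1.nonempty
    obtain ⟨x, -⟩ : z ∈ range i := hrange ▸ subset_closure hz
    exact ⟨x⟩
  · have hxi : x ∈ closure (i ⁻¹' extremePoints ℝ L) := by
      rw [(i.continuous.isClosedEmbedding hinj).isInducing.closure_eq_preimage_closure_image,
        image_preimage_eq_of_subset (hrange ▸ subset_closure), mem_preimage, ← hrange]
      exact mem_range_self x
    exact closure_minimal (fun y => diracState_mem_closure_orbit_of_minimal hL hinj hi hiL hθ)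
      (isClosed_closure.preimage continuous_diracState) hxi

/-- The action of `G` on an invariant subset of a linear representation. -/
abbrev invariantSubsetAction (ρ : G →* (E →L[ℝ] E)) (N : Set E)
    (hN : ∀ g : G, MapsTo (ρ g) N N) : MulAction G N where
  smul g x := ⟨ρ g x, hN g x.2⟩
  one_smul x := Subtype.ext (by change ρ 1 (x : E) = x; simp)
  mul_smul g h x := Subtype.ext (by change ρ (g * h) (x : E) = ρ g (ρ h x); simp)

theorem IsInvariantCompactConvex.exists_isBoundary {K : Set E}
    (hK : IsInvariantCompactConvex ρ K) :
    ∃ X ⊆ K, ∃ (_ : CompactSpace X) (_ : MulAction G X) (_ : ContinuousConstSMul G X),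
      IsBoundary G X ∧ ∀ (g : G) (x : X), ((g • x : X) : E) = ρ g x := by
  obtain ⟨L, hLK, hL⟩ := hK.exists_minimal
  have hsub : closure (extremePoints ℝ L) ⊆ L :=
    closure_minimal extremePoints_subset hL.1.isCompact.isClosed
  have hinv : ∀ g : G, MapsTo (ρ g) (closure (extremePoints ℝ L)) (closure (extremePoints ℝ L)) :=
    fun g => (mapsTo_extremePoints hL.1.mapsTo g).closure (ρ g).continuous
  have hcompact : CompactSpace (closure (extremePoints ℝ L)) :=
    isCompact_iff_compactSpace.1 (hL.1.isCompact.of_isClosed_subset isClosed_closure hsub)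
  let action := invariantSubsetAction ρ _ hinv
  have hcont : ContinuousConstSMul G (closure (extremePoints ℝ L)) :=
    ⟨fun g => ((ρ g).continuous.comp continuous_subtype_val).subtype_mk _⟩
  refine ⟨_, hsub.trans hLK, hcompact, action, hcont, ?_, fun _ _ => rfl⟩
  exact isBoundary_of_range_eq_closure_extremePoints (i := ⟨_, continuous_subtype_val⟩) hL
    Subtype.val_injective (fun _ _ => rfl) Subtype.range_val

end ExtremeBoundaries

section EquivariantMeans

variable {Y : Type u} [TopologicalSpace Y] [MulAction G Y] [TopologicalSpace G]
  [DiscreteTopology G]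

/-- A continuous `G`-equivariant family of means on `ℓ^∞(G)` indexed by `Y`; dually, a
`G`-equivariant unital positive map `ℓ^∞(G) → C(Y)`. -/
structure IsEquivariantMean (q : C(Y, WeakDual ℝ (G →ᵇ ℝ))) : Prop where
  mem_stateSpace : ∀ y, q y ∈ stateSpace G
  map_smul : ∀ (g : G) (y : Y), q (g • y) = stateRep G G g (q y)

theorem isInvariantCompactConvex_stateSpace :
    IsInvariantCompactConvex (stateRep G G) (stateSpace G) where
  nonempty := ⟨_, diracState_mem_stateSpace 1⟩
  isCompact := isCompact_stateSpace
  convex := convex_stateSpace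
  mapsTo g _ := stateRep_mem_stateSpace g

/-- The orbit map `g ↦ g • x`, continuous as `G` is discrete. -/
def orbitMap (x : Y) : C(G, Y) := ⟨(· • x), continuous_of_discreteTopology⟩

variable [ContinuousConstSMul G Y]

theorem pushforward_orbitMap_stateRep (x : Y) (g : G) (m : WeakDual ℝ (G →ᵇ ℝ)) :
    pushforward (orbitMap x) (stateRep G G g m) = stateRep G Y g (pushforward (orbitMap x) m) :=
  DFunLike.ext _ _ fun f => congrArg m <|
    BoundedContinuousFunction.ext fun h => congrArg f (mul_smul g h x)

variable [CompactSpace Y] [T2Space Y]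

theorem IsFurstenberg.exists_isEquivariantMean (hY : IsFurstenberg G Y) :
    ∃ q : C(Y, WeakDual ℝ (G →ᵇ ℝ)), IsEquivariantMean q := by
  obtain ⟨X, hX, hcompact, action, hcont, hbdry, hsmul⟩ :=
    (isInvariantCompactConvex_stateSpace (G := G)).exists_isBoundary
  obtain ⟨q, hq, -, hqsmul⟩ := hY.2 X _ hcompact inferInstance action hcont hbdry
  exact ⟨⟨fun y => q y, continuous_subtype_val.comp hq⟩, fun y => hX (q y).2,
    fun g y => (congrArg Subtype.val (hqsmul g y)).trans (hsmul g (q y))⟩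

theorem IsEquivariantMean.apply_comp_orbitMap (hY : IsBoundary G Y)
    {q : C(Y, WeakDual ℝ (G →ᵇ ℝ))} (hq : IsEquivariantMean q) (x y : Y) (f : Y →ᵇ ℝ) :
    q y (f.compContinuous (orbitMap x)) = f y := by
  have hsmul : ∀ (g : G) (y : Y), pushforward (orbitMap x) (q (g • y)) =
      stateRep G Y g (pushforward (orbitMap x) (q y)) := fun g y => by
    rw [hq.map_smul, pushforward_orbitMap_stateRep]
  exact DFunLike.congr_fun (eq_diracState_of_equivariant hY
    (p := ⟨_, (pushforward (orbitMap x)).continuous.comp q.continuous⟩)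
    (fun y => pushforward_mem_stateSpace _ (hq.mem_stateSpace y)) hsmul y) f

/-- The indicator function of a set in a discrete space. -/
def discreteIndicator (A : Set G) : G →ᵇ ℝ :=
  ofNormedAddCommGroupDiscrete (A.indicator 1) 1 fun g => by
    by_cases hg : g ∈ A <;> simp [hg]

theorem IsEquivariantMean.extremallyDisconnected (hY : IsBoundary G Y)
    {q : C(Y, WeakDual ℝ (G →ᵇ ℝ))} (hq : IsEquivariantMean q) : ExtremallyDisconnected Y where
  open_closure U hU := by
    obtain ⟨x⟩ := hY.1
    let e : G →ᵇ ℝ := discreteIndicator {g | g • x ∈ U}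
    have hcont : Continuous fun y => q y e := (WeakDual.eval_continuous e).comp q.continuous
    have hinside : closure U ⊆ {y | 1 ≤ q y e} := by
      refine closure_minimal (fun y hy => ?_) (isClosed_le continuous_const hcont)
      obtain ⟨f, hf0, hf1, hf⟩ := exists_continuous_zero_one_of_isClosed
        hU.isClosed_compl (isClosed_singleton (x := y)) (by simpa using hy)
      have hle : (mkOfCompact f).compContinuous (orbitMap x) ≤ e := fun g => by
        by_cases hg : g • x ∈ U
        · exact ((hf (g • x)).2).trans_eq (indicator_of_mem hg 1).symm
        · exact (hf0 hg).trans_le (indicator_of_notMem (s := {g | g • x ∈ U}) hg 1).ge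
      have := state_mono (hq.mem_stateSpace y) hle
      rwa [hq.apply_comp_orbitMap hY, mkOfCompact_apply, hf1 rfl] at this
    have houtside : ∀ y ∉ closure U, q y e ≤ 0 := fun y hy => by
      obtain ⟨f, hf0, hf1, hf⟩ := exists_continuous_zero_one_of_isClosed
        (isClosed_closure (s := U)) (isClosed_singleton (x := y)) (by simpa using hy)
      have hle : ∀ g, (e + (mkOfCompact f).compContinuous (orbitMap x) : G →ᵇ ℝ) g ≤ 1 := by
        intro g
        change indicator {g | g • x ∈ U} 1 g + f (g • x) ≤ 1
        by_cases hg : g • x ∈ U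
        · simp [hg, hf0 (subset_closure hg)]
        · simpa [hg] using (hf (g • x)).2
      have := state_le_of_le (hq.mem_stateSpace y) hle
      rw [map_add, hq.apply_comp_orbitMap hY, mkOfCompact_apply, hf1 rfl] at this
      simpa using this
    have : closure U = {y | 0 < q y e} := Subset.antisymm
      (fun y hy => zero_lt_one.trans_le (show 1 ≤ q y e from hinside hy))
      fun y hy => by_contra fun hyU => (houtside y hyU).not_gt hy
    exact this ▸ isOpen_lt continuous_const hcont

end EquivariantMeans

section Frolik

variable {Y : Type*} [TopologicalSpace Y]

theorem exists_maximal_disjoint_preimage (f : Y ≃ₜ Y) :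
    ∃ U : Set Y, Maximal (fun U => IsOpen U ∧ Disjoint U (f ⁻¹' U)) U := by
  refine zorn_subset {U | IsOpen U ∧ Disjoint U (f ⁻¹' U)} fun c hc hchain =>
    ⟨⋃₀ c, ⟨isOpen_sUnion fun U hU => (hc hU).1, ?_⟩, fun U => subset_sUnion_of_mem⟩
  refine disjoint_left.2 ?_
  rintro y ⟨U, hU, hy⟩ ⟨V, hV, hfy⟩
  obtain ⟨W, hW, hUW, hVW⟩ := hchain.directedOn U hU V hV
  exact disjoint_left.1 (hc hW).2 (hUW hy) (hVW hfy)

theorem isClosed_of_maximal_disjoint_preimage [ExtremallyDisconnected Y] {f : Y ≃ₜ Y} {U : Set Y}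
    (hU : Maximal (fun U => IsOpen U ∧ Disjoint U (f ⁻¹' U)) U) : IsClosed U := by
  have hdisjoint : Disjoint (closure U) (f ⁻¹' closure U) := f.preimage_closure U ▸
    ExtremallyDisconnected.disjoint_closure_of_disjoint_isOpen hU.1.2 hU.1.1
      (hU.1.1.preimage f.continuous)
  exact closure_subset_iff_isClosed.1 <|
    hU.2 ⟨ExtremallyDisconnected.open_closure U hU.1.1, hdisjoint⟩ subset_closure

-- A point outside the three sets that is moved by `f` has a neighbourhood enlarging `U`.
theorem fixedPoints_eq_compl_of_maximal [T2Space Y] {f : Y ≃ₜ Y} {U : Set Y}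
    (hU : Maximal (fun U => IsOpen U ∧ Disjoint U (f ⁻¹' U)) U) (hclosed : IsClosed U) :
    Function.fixedPoints f = (U ∪ f ⁻¹' U ∪ f.symm ⁻¹' U)ᶜ := by
  have hmoved : ∀ y ∈ U, f y ∉ U := fun y hy => disjoint_left.1 hU.1.2 hy
  ext y
  simp only [Function.mem_fixedPoints, Function.IsFixedPt, mem_compl_iff, mem_union, mem_preimage,
    not_or]
  refine ⟨fun hy => ?_, fun ⟨⟨hy, hfy⟩, hfy'⟩ => by_contra fun hne => ?_⟩
  · have hyU : y ∉ U := fun h => hmoved y h (hy.symm ▸ h)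
    rw [hy, f.symm_apply_eq.2 hy.symm]
    exact ⟨⟨hyU, hyU⟩, hyU⟩
  · obtain ⟨A, B, hA, hB, hyA, hyB, hAB⟩ := t2_separation hne
    let W : Set Y := (f ⁻¹' A ∩ B) ∩ ((f ⁻¹' U)ᶜ ∩ (f.symm ⁻¹' U)ᶜ)
    have hW : IsOpen W := ((hA.preimage f.continuous).inter hB).inter
      ((hclosed.preimage f.continuous).isOpen_compl.inter
        (hclosed.preimage f.symm.continuous).isOpen_compl)
    have hdisjoint : Disjoint (U ∪ W) (f ⁻¹' (U ∪ W)) := by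
      refine disjoint_left.2 ?_
      rintro v (hv | hv) (hfv | hfv)
      · exact hmoved v hv hfv
      · exact hfv.2.2 (by simpa using hv)
      · exact hv.2.1 hfv
      · exact disjoint_left.1 hAB hv.1.1 hfv.1.2
    exact hy (hU.2 ⟨hU.1.1.union hW, hdisjoint⟩ subset_union_left
      (Or.inr ⟨⟨hyA, hyB⟩, hfy, hfy'⟩))

/-- **Frolík's theorem**. -/
theorem isOpen_fixedPoints [ExtremallyDisconnected Y] [T2Space Y] (f : Y ≃ₜ Y) :
    IsOpen (Function.fixedPoints f) := by
  obtain ⟨U, hU⟩ := exists_maximal_disjoint_preimage f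
  have hclosed := isClosed_of_maximal_disjoint_preimage hU
  rw [fixedPoints_eq_compl_of_maximal hU hclosed]
  exact ((hclosed.union (hclosed.preimage f.continuous)).union
    (hclosed.preimage f.symm.continuous)).isOpen_compl

end Frolik

section OperatorStates

variable {A : Type*}

section NormedAlgebra

variable [NormedRing A] [NormedAlgebra ℂ A]

variable (A) in
/-- The states of a unital C*-algebra, encoded as the unital contractive functionals. This is
equivalent to the usual positivity by `mem_operatorStates_iff`, and it makes weak* compactness
and Hahn–Banach extension immediate. -/
def operatorStates : Set (WeakDual ℂ A) :=
  {φ | φ 1 = 1 ∧ ∀ a, ‖φ a‖ ≤ ‖a‖}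

theorem isCompact_operatorStates : IsCompact (operatorStates A) := by
  refine (WeakDual.isCompact_closedBall (0 : StrongDual ℂ A) 1).of_isClosed_subset ?_
    fun φ hφ => ?_
  · simp only [operatorStates, ofPred_and, ofPred_forall]
    exact (isClosed_eq (WeakDual.eval_continuous 1) continuous_const).inter <|
      isClosed_iInter fun a => isClosed_le (WeakDual.eval_continuous a).norm continuous_const
  · rw [mem_preimage, mem_closedBall_zero_iff]
    exact ContinuousLinearMap.opNorm_le_bound _ zero_le_one fun a =>
      (hφ.2 a).trans_eq (one_mul _).symm

theorem exists_operatorState_extension [StarRing A] [StarModule ℂ A] {S : StarSubalgebra ℂ A}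
    {φ : WeakDual ℂ S} (hφ : φ ∈ operatorStates S) :
    ∃ ψ ∈ operatorStates A, ∀ a : S, ψ a = φ a := by
  obtain ⟨ψ, hψ, hnorm⟩ := exists_extension_norm_eq (Subalgebra.toSubmodule S.toSubalgebra)
    (WeakDual.toStrongDual φ)
  have hle : ‖ψ‖ ≤ 1 := hnorm.trans_le <|
    ContinuousLinearMap.opNorm_le_bound _ zero_le_one fun a =>
      (hφ.2 a).trans_eq (one_mul _).symm
  exact ⟨StrongDual.toWeakDual ψ, ⟨(hψ ⟨1, one_mem S⟩).trans hφ.1, fun a =>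
    (ψ.le_of_opNorm_le hle a).trans_eq (one_mul _)⟩, hψ⟩

end NormedAlgebra

section Order

variable [CStarAlgebra A] [PartialOrder A] [StarOrderedRing A]

theorem norm_sub_algebraMap_le_of_nonneg {a : A} (ha : 0 ≤ a) {z : ℂ} {r : ℝ} (hr : 0 ≤ r)
    (h : ∀ x ∈ Icc 0 ‖a‖, ‖(x : ℂ) - z‖ ≤ r) : ‖a - algebraMap ℂ A z‖ ≤ r := by
  rcases subsingleton_or_nontrivial A with _ | _
  · rwa [Subsingleton.elim (a - algebraMap ℂ A z) 0, norm_zero]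
  have hnormal : IsStarNormal a := ha.isSelfAdjoint.isStarNormal
  rw [← cfc_id' ℂ a, ← cfc_const z a, ← cfc_sub ..]
  refine norm_cfc_le hr fun w hw => ?_
  have hw0 : 0 ≤ w := spectrum_nonneg_of_nonneg ha hw
  have hwre : w = (w.re : ℂ) := Complex.eq_re_of_ofReal_le hw0
  rw [hwre]
  exact h w.re ⟨hw0.1, (Complex.re_le_norm w).trans (spectrum.norm_le_norm_of_mem hw)⟩

theorem operatorState_nonneg {φ : WeakDual ℂ A} (hφ : φ ∈ operatorStates A) {a : A}
    (ha : 0 ≤ a) : 0 ≤ φ a := by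
  -- `φ a` lies in every closed disc that contains the interval `[0, ‖a‖]`.
  have hdisc : ∀ {z : ℂ} {r : ℝ}, 0 ≤ r → (∀ x ∈ Icc 0 ‖a‖, ‖(x : ℂ) - z‖ ≤ r) →
      ‖φ a - z‖ ≤ r := fun hr h => by
    refine le_trans (le_of_eq_of_le ?_ (hφ.2 _)) (norm_sub_algebraMap_le_of_nonneg ha hr h)
    rw [Algebra.algebraMap_eq_smul_one, map_sub, map_smul, hφ.1, smul_eq_mul, mul_one]
  have hre : 0 ≤ (φ a).re := by
    have hnorm := hdisc (z := ‖a‖) (norm_nonneg a) fun x hx => by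
      rw [← Complex.ofReal_sub, Complex.norm_real, Real.norm_eq_abs, abs_le]
      constructor <;> linarith [hx.1, hx.2]
    have hsub := (neg_abs_le _).trans' (neg_le_neg ((Complex.abs_re_le_norm _).trans hnorm))
    simpa using hsub
  have him : ∀ t : ℝ, (φ a).im ^ 2 - 2 * t * (φ a).im ≤ ‖a‖ ^ 2 := fun t => by
    have hnorm := hdisc (z := t * Complex.I) (Real.sqrt_nonneg (‖a‖ ^ 2 + t ^ 2)) fun x hx => by
      rw [Complex.norm_eq_sqrt_sq_add_sq]
      refine Real.sqrt_le_sqrt ?_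
      have := pow_le_pow_left₀ hx.1 hx.2 2
      simpa using this
    rw [Complex.norm_eq_sqrt_sq_add_sq, Real.sqrt_le_sqrt_iff (by positivity)] at hnorm
    have hsq : (φ a).re ^ 2 + ((φ a).im - t) ^ 2 ≤ ‖a‖ ^ 2 + t ^ 2 := by simpa using hnorm
    nlinarith [sq_nonneg (φ a).re]
  refine Complex.le_def.2 ⟨hre, ?_⟩
  by_contra hne
  have hne : (φ a).im ≠ 0 := Ne.symm hne
  have hlarge := him (-(‖a‖ ^ 2 / (φ a).im))
  have hcancel : ‖a‖ ^ 2 / (φ a).im * (φ a).im = ‖a‖ ^ 2 := div_mul_cancel₀ _ hne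
  linarith [sq_pos_of_ne_zero hne, sq_nonneg ‖a‖]

theorem norm_star_mul_le_of_positive (f : A →ₚ[ℂ] ℂ) (a b : A) :
    ‖f (star a * b)‖ ≤ √(f (star a * a)).re * √(f (star b * b)).re :=
  norm_inner_le_norm (f.toPreGNS a) (f.toPreGNS b)

theorem mem_operatorStates_of_nonneg {φ : WeakDual ℂ A} (h1 : φ 1 = 1)
    (hpos : ∀ a : A, 0 ≤ φ (star a * a)) : φ ∈ operatorStates A := by
  let f : A →ₚ[ℂ] ℂ := PositiveLinearMap.mk₀ (φ : A →ₗ[ℂ] ℂ) fun a ha => by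
    obtain ⟨b, rfl⟩ := CStarAlgebra.nonneg_iff_eq_star_mul_self.1 ha
    exact hpos b
  refine ⟨h1, fun a => ?_⟩
  have hone : ‖f.toPreGNS 1‖ = 1 := by
    rw [f.preGNS_norm_def, f.ofPreGNS_toPreGNS, star_one, mul_one]
    exact (congrArg (fun z : ℂ => √z.re) h1).trans Real.sqrt_one
  calc ‖φ a‖ = ‖inner ℂ (f.toPreGNS 1) (f.leftMulMapPreGNS a (f.toPreGNS 1))‖ := by
        rw [f.preGNS_inner_def, f.ofPreGNS_toPreGNS, star_one, one_mul, f.leftMulMapPreGNS_apply,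
          f.ofPreGNS_toPreGNS, f.ofPreGNS_toPreGNS, mul_one]
        rfl
    _ ≤ ‖f.toPreGNS 1‖ * ‖f.leftMulMapPreGNS a (f.toPreGNS 1)‖ := norm_inner_le_norm _ _
    _ ≤ ‖f.toPreGNS 1‖ * (‖a‖ * ‖f.toPreGNS 1‖) := by
        gcongr
        exact ContinuousLinearMap.le_of_opNorm_le _
          (LinearMap.mkContinuous_norm_le _ (norm_nonneg a) _) _
    _ = ‖a‖ := by rw [hone, one_mul, mul_one]

end Order

variable [CStarAlgebra A] {φ : WeakDual ℂ A}

theorem mem_operatorStates_iff :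
    φ ∈ operatorStates A ↔ φ 1 = 1 ∧ ∀ a, 0 ≤ φ (star a * a) := by
  let := CStarAlgebra.spectralOrder A
  have := CStarAlgebra.spectralOrderedRing A
  exact ⟨fun hφ => ⟨hφ.1, fun a => operatorState_nonneg hφ (star_mul_self_nonneg a)⟩,
    fun hφ => mem_operatorStates_of_nonneg hφ.1 hφ.2⟩

theorem norm_operatorState_star_mul_le (hφ : φ ∈ operatorStates A) (a b : A) :
    ‖φ (star a * b)‖ ≤ √(φ (star a * a)).re * √(φ (star b * b)).re := by
  let := CStarAlgebra.spectralOrder A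
  have := CStarAlgebra.spectralOrderedRing A
  exact norm_star_mul_le_of_positive
    (PositiveLinearMap.mk₀ (φ : A →ₗ[ℂ] ℂ) fun _ => operatorState_nonneg hφ) a b

end OperatorStates

section RegularRepresentation

variable (G) in
/-- The algebra `B(ℓ²(G))` that contains `C*_λ(G)`. -/
abbrev RegularOperators : Type u := ℓ²(G, ℂ) →L[ℂ] ℓ²(G, ℂ)

theorem lreg_apply (g : G) (ξ : ℓ²(G, ℂ)) (h : G) : lreg g ξ h = ξ (g⁻¹ * h) := by
  unfold lreg lregE
  rfl

variable (G) in
/-- The left regular representation as a monoid homomorphism into `B(ℓ²(G))`. -/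
def lregHom : G →* RegularOperators G where
  toFun := lreg
  map_one' := by
    ext ξ h
    rw [lreg_apply, inv_one, one_mul]
    rfl
  map_mul' g k := by
    ext ξ h
    rw [mul_apply_eq_comp, lreg_apply, lreg_apply, lreg_apply, mul_inv_rev, mul_assoc]

theorem lreg_one : lreg (1 : G) = 1 := (lregHom G).map_one

theorem lreg_mul (g k : G) : lreg (g * k) = lreg g * lreg k := (lregHom G).map_mul g k

theorem norm_lreg_apply (g : G) (ξ : ℓ²(G, ℂ)) : ‖lreg g ξ‖ = ‖ξ‖ := by
  unfold lreg
  exact (lregE g).norm_map ξ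

theorem norm_lreg_le (g : G) : ‖lreg g‖ ≤ 1 :=
  ContinuousLinearMap.opNorm_le_bound _ zero_le_one fun ξ => by rw [norm_lreg_apply, one_mul]

theorem star_lreg (g : G) : star (lreg g) = lreg g⁻¹ := by
  have hisometry : star (lreg g) * lreg g = 1 := by
    rw [ContinuousLinearMap.star_eq_adjoint]
    exact ContinuousLinearMap.norm_map_iff_adjoint_comp_self _ |>.1 (norm_lreg_apply g)
  rw [← mul_one (star (lreg g)), ← lreg_one, ← mul_inv_cancel g, lreg_mul, ← mul_assoc,
    hisometry, one_mul]

theorem coe_uu (g : G) : (uu g : RegularOperators G) = lreg g := by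
  unfold uu
  rfl

theorem uu_one : uu (1 : G) = 1 := Subtype.ext <| by
  rw [coe_uu, lreg_one, OneMemClass.coe_one]

theorem isClosed_redCstar : IsClosed (redCstar G : Set (RegularOperators G)) := by
  unfold redCstar
  exact StarSubalgebra.isClosed_topologicalClosure _

theorem toSubmodule_adjoin_range_lreg :
    Subalgebra.toSubmodule (StarAlgebra.adjoin ℂ (range (lreg (G := G)))).toSubalgebra =
      Submodule.span ℂ (range lreg) := by
  have hstar : star (range (lreg (G := G))) = range lreg := by
    ext T
    rw [mem_star]
    constructor
    · rintro ⟨g, hg⟩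
      exact ⟨g⁻¹, by rw [← star_lreg, hg, star_star]⟩
    · rintro ⟨g, rfl⟩
      exact ⟨g⁻¹, (star_lreg g).symm⟩
  have hrange : range (lreg (G := G)) = MonoidHom.mrange (lregHom G) :=
    (MonoidHom.coe_mrange (lregHom G)).symm
  rw [StarAlgebra.adjoin_eq_span, hstar, union_self, hrange, Submonoid.closure_eq]

theorem dense_span_range_uu :
    Dense (Submodule.span ℂ (range (uu (G := G))) : Set (redCstar G)) := by
  intro a
  have hspan : (Subtype.val '' (Submodule.span ℂ (range (uu (G := G))) : Set (redCstar G))) =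
      StarAlgebra.adjoin ℂ (range (lreg (G := G))) := by
    have hmap := Submodule.map_span
      (redCstar G).toSubalgebra.val.toLinearMap (range (uu (G := G)))
    rw [← range_comp, show ⇑(redCstar G).toSubalgebra.val.toLinearMap ∘ uu = lreg from
      funext coe_uu, ← toSubmodule_adjoin_range_lreg] at hmap
    exact congrArg SetLike.coe hmap
  have hmem : (a : RegularOperators G) ∈
      (StarAlgebra.adjoin ℂ (range (lreg (G := G)))).topologicalClosure := by
    have := a.2
    unfold redCstar at this
    exact this
  rwa [closure_subtype, hspan, ← StarSubalgebra.topologicalClosure_coe]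

variable (G) in
/-- The canonical trace `τ_λ` as a bounded functional on `C*_λ(G)`. -/
def canonicalTrace : redCstar G →L[ℂ] ℂ where
  toFun := tauF G
  map_add' a b := by
    unfold tauF
    exact inner_add_right (𝕜 := ℂ) ..
  map_smul' c a := by
    unfold tauF
    exact inner_smul_right (𝕜 := ℂ) ..
  cont := by
    unfold tauF
    fun_prop

theorem deltaOne_eq [DecidableEq G] : deltaOne = lp.single 2 (1 : G) (1 : ℂ) := by
  unfold deltaOne
  rw [Subsingleton.elim (Classical.decEq G)]

theorem tauF_one : tauF G 1 = 1 := by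
  classical
  unfold tauF
  change inner ℂ deltaOne deltaOne = (1 : ℂ)
  rw [deltaOne_eq, lp.inner_single_left, lp.single_apply_self]
  simp

theorem tauF_uu {s : G} (hs : s ≠ 1) : tauF G (uu s) = 0 := by
  classical
  unfold tauF
  rw [coe_uu, deltaOne_eq, lp.inner_single_left, lreg_apply, mul_one,
    lp.single_apply_ne _ _ _ (inv_ne_one.2 hs), inner_zero_right]

theorem eq_tauF_of_uu {F : redCstar G →L[ℂ] ℂ} (h1 : F 1 = 1) (h : ∀ s ≠ 1, F (uu s) = 0)
    (a : redCstar G) : F a = tauF G a := by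
  have hF : F = canonicalTrace G := by
    refine ContinuousLinearMap.ext_on dense_span_range_uu ?_
    rintro _ ⟨s, rfl⟩
    by_cases hs : s = 1
    · rw [hs, uu_one, h1]
      exact tauF_one.symm
    · exact (h s hs).trans (tauF_uu hs).symm
  exact DFunLike.congr_fun hF a

end RegularRepresentation

section Amenability

variable {ι S : Type*} [MulAction G S]

/-- The families `(tᵢ p - p)ᵢ` in `ℓ¹`, where `p` runs over the probability distributions on
`S`. Almost invariant `p` exist iff `0` is in the closure. -/
def translationDefects (t : ι → G) : Set (lp (fun _ : ι × S => ℝ) 1) :=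
  {v | ∃ p : S → ℝ, (∀ s, 0 ≤ p s) ∧ HasSum p 1 ∧
    ∀ i s, v (i, s) = p ((t i)⁻¹ • s) - p s}

theorem convex_translationDefects (t : ι → G) :
    Convex ℝ (translationDefects t : Set (lp (fun _ : ι × S => ℝ) 1)) := by
  rintro v ⟨p, hp0, hp1, hp⟩ w ⟨r, hr0, hr1, hr⟩ a b ha hb hab
  refine ⟨a • p + b • r, fun s => ?_, ?_, fun i s => ?_⟩
  · exact add_nonneg (mul_nonneg ha (hp0 s)) (mul_nonneg hb (hr0 s))
  · have hsum := (hp1.mul_left a).add (hr1.mul_left b)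
    rwa [mul_one, mul_one, hab] at hsum
  · simp only [lp.coeFn_add, lp.coeFn_smul, Pi.add_apply, Pi.smul_apply, smul_eq_mul, hp, hr]
    ring

theorem sum_single_sub_single_mem_translationDefects [Fintype ι] [DecidableEq ι]
    [DecidableEq S] (t : ι → G) (s : S) :
    ∑ i, (lp.single 1 (i, t i • s) (1 : ℝ) - lp.single 1 (i, s) (1 : ℝ)) ∈
      translationDefects t := by
  refine ⟨Pi.single s 1, (Pi.single_nonneg.2 zero_le_one : (0 : S → ℝ) ≤ _),
    hasSum_pi_single s 1, fun i r => ?_⟩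
  rw [lp.coeFn_sum, Finset.sum_apply, Finset.sum_eq_single_of_mem i (Finset.mem_univ i)]
  · simp [lp.single_apply, Pi.single_apply, inv_smul_eq_iff]
  · intro j _ hj
    simp [lp.single_apply, hj.symm]

variable [Finite ι] [TopologicalSpace S] [DiscreteTopology S] [ContinuousConstSMul G S]

theorem zero_mem_closure_translationDefects {m : WeakDual ℝ (S →ᵇ ℝ)} (hm : m ∈ stateSpace S)
    {t : ι → G} (ht : ∀ i, stateRep G S (t i) m = m) :
    (0 : lp (fun _ : ι × S => ℝ) 1) ∈ closure (translationDefects t) := by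
  classical
  have := Fintype.ofFinite ι
  by_contra hnot
  obtain ⟨ℓ, c, hc0, hc⟩ := geometric_hahn_banach_point_closed
    (convex_translationDefects t).closure isClosed_closure hnot
  let u : ι → S →ᵇ ℝ := fun i =>
    ofNormedAddCommGroupDiscrete (fun s => ℓ (lp.single 1 (i, s) 1)) ‖ℓ‖ fun s => by
      simpa [lp.norm_single] using ℓ.le_opNorm (lp.single 1 (i, s) 1)
  let h : S →ᵇ ℝ := ∑ i, ((u i).compContinuous (translation (t i)) - u i)
  have hpos : ∀ s, c ≤ h s := fun s => by
    have hs := hc _ (subset_closure (sum_single_sub_single_mem_translationDefects t s))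
    rw [map_sum] at hs
    simp only [map_sub] at hs
    refine hs.le.trans_eq ?_
    simp only [h, BoundedContinuousFunction.sum_apply]
    rfl
  have hzero : m h = 0 := by
    rw [map_sum]
    refine Finset.sum_eq_zero fun i _ => ?_
    rw [map_sub, ← stateRep_apply, ht, sub_self]
  rw [map_zero] at hc0
  exact (hc0.trans_le (le_state_of_le hm hpos)).ne' hzero

theorem exists_almostInvariant_distribution {m : WeakDual ℝ (S →ᵇ ℝ)} (hm : m ∈ stateSpace S)
    {t : ι → G} (ht : ∀ i, stateRep G S (t i) m = m) {ε : ℝ} (hε : 0 < ε) :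
    ∃ p : S → ℝ, (∀ s, 0 ≤ p s) ∧ HasSum p 1 ∧ ∀ i,
      Summable (fun s => |p ((t i)⁻¹ • s) - p s|) ∧ ∑' s, |p ((t i)⁻¹ • s) - p s| < ε := by
  obtain ⟨v, ⟨p, hp0, hp1, hp⟩, hv⟩ :=
    Metric.mem_closure_iff.1 (zero_mem_closure_translationDefects hm ht) ε hε
  have hsummable : Summable fun k => ‖v k‖ := by
    simpa using (memℓp_gen_iff (p := 1) (by norm_num)).1 (lp.memℓp v)
  have hnorm : ‖v‖ = ∑' k, ‖v k‖ := by
    simpa using lp.norm_eq_tsum_rpow (p := 1) (by norm_num) v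
  refine ⟨p, hp0, hp1, fun i => ?_⟩
  have hslice : (fun s => |p ((t i)⁻¹ • s) - p s|) = (fun k => ‖v k‖) ∘ Prod.mk i := by
    ext s
    rw [Function.comp_apply, hp, Real.norm_eq_abs]
  rw [dist_zero_left, hnorm] at hv
  rw [hslice]
  exact ⟨hsummable.comp_injective (Prod.mk_right_injective i),
    (tsum_comp_le_tsum_of_inj hsummable (fun _ => norm_nonneg _)
      (Prod.mk_right_injective i)).trans_lt hv⟩

end Amenability

section AlmostInvariantVectors

theorem sq_sqrt_sub_sqrt_le {a b : ℝ} (ha : 0 ≤ a) (hb : 0 ≤ b) :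
    (√a - √b) ^ 2 ≤ |a - b| := by
  have hadd : 0 ≤ √a + √b := add_nonneg (Real.sqrt_nonneg a) (Real.sqrt_nonneg b)
  calc (√a - √b) ^ 2 = |√a - √b| * |√a - √b| := by rw [← sq, sq_abs]
    _ ≤ |√a - √b| * |√a + √b| := by
        refine mul_le_mul_of_nonneg_left ?_ (abs_nonneg _)
        rw [abs_of_nonneg hadd, abs_le]
        constructor <;> linarith [Real.sqrt_nonneg a, Real.sqrt_nonneg b]
    _ = |a - b| := by
        rw [← abs_mul, mul_comm, ← sq_sub_sq, Real.sq_sqrt ha, Real.sq_sqrt hb]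

theorem norm_sq_eq_tsum {S : Type*} (ξ : ℓ²(S, ℂ)) : ‖ξ‖ ^ 2 = ∑' s, ‖ξ s‖ ^ 2 := by
  simpa using lp.norm_rpow_eq_tsum (p := 2) (by norm_num) ξ

theorem exists_norm_lreg_sub_sq_le {p : G → ℝ} (hp0 : ∀ g, 0 ≤ p g) (hp1 : HasSum p 1) :
    ∃ ξ : ℓ²(G, ℂ), ‖ξ‖ = 1 ∧ ∀ t : G, Summable (fun g => |p (t⁻¹ * g) - p g|) →
      ‖lreg t ξ - ξ‖ ^ 2 ≤ ∑' g, |p (t⁻¹ * g) - p g| := by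
  have hsq : ∀ g, ‖(√(p g) : ℂ)‖ ^ 2 = p g := fun g => by
    rw [Complex.norm_real, Real.norm_eq_abs, sq_abs, Real.sq_sqrt (hp0 g)]
  have hmem : Memℓp (fun g => (√(p g) : ℂ)) 2 := memℓp_gen <| by
    simpa only [ENNReal.toReal_ofNat, Real.rpow_ofNat, hsq] using hp1.summable
  let ξ : ℓ²(G, ℂ) := ⟨_, hmem⟩
  have hξ : ∀ g, ξ g = √(p g) := fun _ => rfl
  refine ⟨ξ, ?_, fun t ht => ?_⟩
  · refine (sq_eq_sq₀ (norm_nonneg ξ) zero_le_one).1 ?_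
    simp_rw [norm_sq_eq_tsum, hξ, hsq, one_pow]
    exact hp1.tsum_eq
  · have hle : ∀ g, ‖(lreg t ξ - ξ) g‖ ^ 2 ≤ |p (t⁻¹ * g) - p g| := fun g => by
      rw [lp.coeFn_sub, Pi.sub_apply, lreg_apply, hξ, hξ, ← Complex.ofReal_sub,
        Complex.norm_real, Real.norm_eq_abs, sq_abs]
      exact sq_sqrt_sub_sqrt_le (hp0 _) (hp0 _)
    rw [norm_sq_eq_tsum]
    exact (Summable.of_nonneg_of_le (fun _ => sq_nonneg _) hle ht).tsum_le_tsum hle ht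

/-- The functional `T ↦ ⟨ξ, T ξ⟩`, a state if `‖ξ‖ = 1`. -/
def vectorState {E : Type*} [NormedAddCommGroup E] [InnerProductSpace ℂ E] (ξ : E) :
    WeakDual ℂ (E →L[ℂ] E) :=
  StrongDual.toWeakDual ((innerSL ℂ ξ).comp (ContinuousLinearMap.apply ℂ E ξ))

theorem vectorState_mem_operatorStates {E : Type*} [NormedAddCommGroup E]
    [InnerProductSpace ℂ E] {ξ : E} (hξ : ‖ξ‖ = 1) :
    vectorState ξ ∈ operatorStates (E →L[ℂ] E) := by
  refine ⟨?_, fun T => ?_⟩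
  · exact (inner_self_eq_norm_sq_to_K ξ).trans (by simp [hξ])
  · calc ‖inner ℂ ξ (T ξ)‖ ≤ ‖ξ‖ * ‖T ξ‖ := norm_inner_le_norm _ _
      _ ≤ ‖ξ‖ * (‖T‖ * ‖ξ‖) := by gcongr; exact T.le_opNorm ξ
      _ = ‖T‖ := by rw [hξ, one_mul, mul_one]

theorem norm_vectorState_sub_one_le {E : Type*} [NormedAddCommGroup E]
    [InnerProductSpace ℂ E] {ξ : E} (hξ : ‖ξ‖ = 1) (T : E →L[ℂ] E) :
    ‖vectorState ξ T - 1‖ ≤ ‖T ξ - ξ‖ := by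
  have hsub : vectorState ξ T - 1 = inner ℂ ξ (T ξ - ξ) := by
    rw [inner_sub_right, inner_self_eq_norm_sq_to_K, hξ]
    simp [vectorState]
  rw [hsub]
  exact (norm_inner_le_norm _ _).trans_eq (by rw [hξ, one_mul])

variable [TopologicalSpace G] [DiscreteTopology G]

theorem exists_almostInvariant_vector {ι : Type*} [Finite ι] {m : WeakDual ℝ (G →ᵇ ℝ)}
    (hm : m ∈ stateSpace G) {t : ι → G} (ht : ∀ i, stateRep G G (t i) m = m) {δ : ℝ}
    (hδ : 0 < δ) : ∃ ξ : ℓ²(G, ℂ), ‖ξ‖ = 1 ∧ ∀ i, ‖lreg (t i) ξ - ξ‖ < δ := by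
  obtain ⟨p, hp0, hp1, hp⟩ := exists_almostInvariant_distribution hm ht (pow_pos hδ 2)
  obtain ⟨ξ, hξ, hle⟩ := exists_norm_lreg_sub_sq_le hp0 hp1
  exact ⟨ξ, hξ, fun i => lt_of_pow_lt_pow_left₀ 2 hδ.le <|
    (hle (t i) (hp i).1).trans_lt (hp i).2⟩

theorem exists_operatorState_lreg_eq_one {m : WeakDual ℝ (G →ᵇ ℝ)} (hm : m ∈ stateSpace G) :
    ∃ φ ∈ operatorStates (RegularOperators G),
      ∀ t : G, stateRep G G t m = m → φ (lreg t) = 1 := by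
  classical
  let H : Set G := {t | stateRep G G t m = m}
  have hvec : ∀ k : Finset H × ℕ, ∃ ξ : ℓ²(G, ℂ), ‖ξ‖ = 1 ∧
      ∀ t ∈ k.1, ‖lreg (t : G) ξ - ξ‖ < 1 / ((k.2 : ℝ) + 1) := fun k => by
    obtain ⟨ξ, hξ, hlt⟩ := exists_almostInvariant_vector hm (t := fun t : k.1 => (t : G))
      (fun t => t.1.2) (Nat.one_div_pos_of_nat (n := k.2))
    exact ⟨ξ, hξ, fun t ht => hlt ⟨t, ht⟩⟩
  choose ξ hξ hlt using hvec
  let U : Ultrafilter (Finset H × ℕ) := Ultrafilter.of atTop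
  obtain ⟨φ, hφ, hlim⟩ := isCompact_operatorStates.ultrafilter_le_nhds
    (U.map fun k => vectorState (ξ k)) <| le_principal_iff.2 <| Ultrafilter.mem_map.2 <|
      univ_mem' fun k => vectorState_mem_operatorStates (hξ k)
  refine ⟨φ, hφ, fun t ht => ?_⟩
  have hφt : Tendsto (fun k => vectorState (ξ k) (lreg t)) U (𝓝 (φ (lreg t))) :=
    ((WeakDual.eval_continuous (lreg t)).tendsto φ).comp hlim
  have hbound : ∀ᶠ k : Finset H × ℕ in atTop,
      ‖vectorState (ξ k) (lreg t) - 1‖ ≤ 1 / ((k.2 : ℝ) + 1) := by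
    filter_upwards [eventually_ge_atTop (({⟨t, ht⟩} : Finset H), 0)] with k hk
    exact (norm_vectorState_sub_one_le (hξ k) _).trans
      (hlt k ⟨t, ht⟩ (hk.1 (Finset.mem_singleton_self _))).le
  have hsnd : Tendsto (fun k : Finset H × ℕ => 1 / ((k.2 : ℝ) + 1)) atTop (𝓝 0) := by
    rw [← prod_atTop_atTop_eq]
    exact tendsto_one_div_add_atTop_nhds_zero_nat.comp tendsto_snd
  refine tendsto_nhds_unique hφt (Tendsto.mono_left ?_ (Ultrafilter.of_le _))
  exact tendsto_iff_norm_sub_tendsto_zero.2 <|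
    squeeze_zero' (Eventually.of_forall fun _ => norm_nonneg _) hbound hsnd

end AlmostInvariantVectors

section CompletePositivity

theorem posSemidef_map_star_mul_self {A : Type*} [CStarAlgebra A] {φ : WeakDual ℂ A}
    (hφ : φ ∈ operatorStates A) {n : Type*} [Fintype n] (N : Matrix n n A) :
    ((star N * N).map φ).PosSemidef := by
  let := CStarAlgebra.spectralOrder A
  have := CStarAlgebra.spectralOrderedRing A
  let f : A →ₚ[ℂ] ℂ := PositiveLinearMap.mk₀ (φ : A →ₗ[ℂ] ℂ) fun _ => operatorState_nonneg hφ
  have hgram : (star N * N).map φ =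
      ∑ k, Matrix.gram ℂ fun i => f.toPreGNS (N k i) := by
    ext i j
    rw [Matrix.map_apply, Matrix.mul_apply, map_sum, Matrix.sum_apply]
    rfl
  rw [hgram]
  exact Matrix.posSemidef_sum _ fun k _ => Matrix.posSemidef_gram ℂ _

open scoped Matrix.Norms.L2Operator MatrixOrder in
theorem exists_continuousMap_star_mul_self {Y n : Type*} [TopologicalSpace Y] [Fintype n]
    {M : Matrix n n C(Y, ℂ)}
    (hM : ∀ y, (M.map fun f => f y).PosSemidef) :
    ∃ P : Matrix n n C(Y, ℂ), M = star P * P := by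
  classical
  let A : Y → Matrix n n ℂ := fun y => M.map fun f => f y
  have hA : ∀ y, 0 ≤ A y := fun y => (hM y).nonneg
  have hsqrt : Continuous fun y => CFC.sqrt (A y) :=
    CFC.continuousOn_sqrt.comp_continuous (continuous_matrix fun i j => (M i j).continuous) hA
  refine ⟨Matrix.of fun i j => ⟨fun y => CFC.sqrt (A y) i j, hsqrt.matrix_elem i j⟩, ?_⟩
  ext i j y
  have hmul : A y = star (CFC.sqrt (A y)) * CFC.sqrt (A y) := by
    rw [(IsSelfAdjoint.of_nonneg (CFC.sqrt_nonneg (A y))).star_eq, CFC.sqrt_mul_sqrt_self _ (hA y)]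
  rw [Matrix.mul_apply, ContinuousMap.sum_apply]
  exact congrFun₂ hmul i j

variable {Y : Type u} [TopologicalSpace Y]

/-- The functional `a ↦ Φ(a)(y)`. -/
def evalAt {A : Type*} [NormedRing A] [NormedAlgebra ℂ A] (Φ : A →L[ℂ] C(Y, ℂ)) (y : Y) :
    WeakDual ℂ A :=
  StrongDual.toWeakDual ((ContinuousMap.evalCLM ℂ y).comp Φ)

theorem isUCP_iff {Φ : redCstar G →L[ℂ] C(Y, ℂ)} :
    IsUCP Φ ↔ ∀ y, evalAt Φ y ∈ operatorStates (redCstar G) := by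
  have := isClosed_redCstar (G := G)
  constructor
  · rintro ⟨h1, hpos⟩ y
    refine mem_operatorStates_iff.2 ⟨DFunLike.congr_fun h1 y, fun a => ?_⟩
    obtain ⟨P, hP⟩ := hpos 1 (Matrix.of fun _ _ => star a * a) ⟨Matrix.of fun _ _ => a, by
      ext i j
      simp [Matrix.mul_apply]⟩
    have hentry : Φ (star a * a) = star (P 0 0) * P 0 0 := by
      simpa [Matrix.mul_apply] using congrFun₂ hP 0 0
    have hy : Φ (star a * a) y = star (P 0 0 y) * P 0 0 y := DFunLike.congr_fun hentry y
    exact hy ▸ star_mul_self_nonneg (P 0 0 y)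
  · refine fun hstate => ⟨ContinuousMap.ext fun y => (hstate y).1, ?_⟩
    rintro n M ⟨N, rfl⟩
    exact exists_continuousMap_star_mul_self fun y => posSemidef_map_star_mul_self (hstate y) N

/-- The linear map `A → C(Y)` given by a continuous family of states on `A`. -/
def mapOfStates [CompactSpace Y] {A : Type*} [NormedRing A] [NormedAlgebra ℂ A]
    (φ : C(Y, WeakDual ℂ A)) (hφ : ∀ y, φ y ∈ operatorStates A) : A →L[ℂ] C(Y, ℂ) :=
  LinearMap.mkContinuous
    { toFun a := ⟨fun y => φ y a, (WeakDual.eval_continuous a).comp φ.continuous⟩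
      map_add' a b := ContinuousMap.ext fun y => map_add (φ y) a b
      map_smul' c a := ContinuousMap.ext fun y => map_smul (φ y) c a } 1 fun a =>
    (one_mul ‖a‖).symm ▸ (ContinuousMap.norm_le _ (norm_nonneg a)).2 fun y => (hφ y).2 a

end CompletePositivity

section AverageStates

variable {A S : Type*} [NormedRing A] [NormedAlgebra ℂ A] [TopologicalSpace S]
  [DiscreteTopology S] {ψ : S → WeakDual ℂ A}

/-- The map `a ↦ (s ↦ Re ψ_s(a))` given by a family of states `ψ_s`. -/
def realCoefficients (hψ : ∀ s, ψ s ∈ operatorStates A) : A →L[ℝ] (S →ᵇ ℝ) :=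
  LinearMap.mkContinuous
    { toFun a := ofNormedAddCommGroupDiscrete (fun s => (ψ s a).re) ‖a‖ fun s =>
        (Complex.abs_re_le_norm _).trans ((hψ s).2 a)
      map_add' a b := BoundedContinuousFunction.ext fun s =>
        (congrArg Complex.re (map_add (ψ s) a b)).trans (Complex.add_re _ _)
      map_smul' c a := BoundedContinuousFunction.ext fun s =>
        (congrArg Complex.re ((ψ s).map_smul_of_tower c a)).trans (Complex.smul_re _ _) }
    1 fun a => (one_mul ‖a‖).symm ▸ (BoundedContinuousFunction.norm_le (norm_nonneg a)).2 fun s =>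
      (Complex.abs_re_le_norm _).trans ((hψ s).2 a)

/-- The average of a family of states `ψ_s` with respect to the mean `m`, that is, the functional
`a ↦ m(s ↦ ψ_s(a))` for the complex-linear extension of `m`. -/
def averageState (hψ : ∀ s, ψ s ∈ operatorStates A) (m : WeakDual ℝ (S →ᵇ ℝ)) : WeakDual ℂ A :=
  StrongDual.toWeakDual <|
    StrongDual.extendRCLike (𝕜 := ℂ) ((WeakDual.toStrongDual m).comp (realCoefficients hψ))

theorem averageState_apply (hψ : ∀ s, ψ s ∈ operatorStates A) (m : WeakDual ℝ (S →ᵇ ℝ)) (a : A) :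
    averageState hψ m a = m (realCoefficients hψ a) -
      Complex.I * m (realCoefficients hψ (Complex.I • a)) := rfl

theorem re_averageState (hψ : ∀ s, ψ s ∈ operatorStates A) (m : WeakDual ℝ (S →ᵇ ℝ)) (a : A) :
    (averageState hψ m a).re = m (realCoefficients hψ a) :=
  StrongDual.re_extendRCLike_apply (𝕜 := ℂ) _ a

theorem continuous_averageState (hψ : ∀ s, ψ s ∈ operatorStates A) :
    Continuous (averageState hψ) := by
  refine WeakDual.continuous_of_continuous_eval fun a => ?_
  have heval := fun a => WeakDual.eval_continuous (𝕜 := ℝ) (realCoefficients hψ a)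
  simp only [averageState_apply]
  exact (Complex.continuous_ofReal.comp (heval a)).sub
    (continuous_const.mul (Complex.continuous_ofReal.comp (heval _)))

theorem averageState_mem_operatorStates (hψ : ∀ s, ψ s ∈ operatorStates A)
    {m : WeakDual ℝ (S →ᵇ ℝ)} (hm : m ∈ stateSpace S) :
    averageState hψ m ∈ operatorStates A := by
  have hone : realCoefficients hψ 1 = const S 1 := BoundedContinuousFunction.ext fun s =>
    (congrArg Complex.re (hψ s).1).trans Complex.one_re
  have hI : realCoefficients hψ (Complex.I • 1) = const S 0 :=
    BoundedContinuousFunction.ext fun s => by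
      change (ψ s (Complex.I • 1)).re = 0
      rw [map_smul, (hψ s).1, smul_eq_mul, mul_one, Complex.I_re]
  refine ⟨?_, fun a => ?_⟩
  · rw [averageState_apply, hone, hI, state_const hm, state_const hm]
    simp
  · have hnorm : ‖(WeakDual.toStrongDual m).comp (realCoefficients hψ)‖ ≤ 1 :=
      ContinuousLinearMap.opNorm_le_bound _ zero_le_one fun a =>
        (abs_state_apply_le hm _).trans <| (realCoefficients hψ).le_of_opNorm_le
          (LinearMap.mkContinuous_norm_le _ zero_le_one _) a
    exact (ContinuousLinearMap.le_of_opNorm_le _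
      ((StrongDual.norm_extendRCLike _).trans_le hnorm) a).trans_eq (one_mul _)

end AverageStates

section ConjugateStates

/-- The state `T ↦ φ(λ_g⁻¹ T λ_g)`. -/
def conjState (g : G) (φ : WeakDual ℂ (RegularOperators G)) : WeakDual ℂ (RegularOperators G) :=
  StrongDual.toWeakDual <| (WeakDual.toStrongDual φ).comp <|
    ContinuousLinearMap.mulLeftRight ℂ (RegularOperators G) (lreg g⁻¹) (lreg g)

theorem conjState_apply (g : G) (φ : WeakDual ℂ (RegularOperators G)) (T : RegularOperators G) :
    conjState g φ T = φ (lreg g⁻¹ * T * lreg g) := rfl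

theorem conjState_lreg (g s : G) (φ : WeakDual ℂ (RegularOperators G)) :
    conjState g φ (lreg s) = φ (lreg (g⁻¹ * s * g)) := by
  rw [conjState_apply, lreg_mul, lreg_mul]

theorem conjState_mem_operatorStates (g : G) {φ : WeakDual ℂ (RegularOperators G)}
    (hφ : φ ∈ operatorStates (RegularOperators G)) :
    conjState g φ ∈ operatorStates (RegularOperators G) := by
  refine ⟨?_, fun T => ?_⟩
  · rw [conjState_apply, mul_one, ← lreg_mul, inv_mul_cancel, lreg_one, hφ.1]
  · calc ‖φ (lreg g⁻¹ * T * lreg g)‖ ≤ ‖lreg g⁻¹ * T * lreg g‖ := hφ.2 _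
      _ ≤ ‖lreg g⁻¹‖ * ‖T‖ * ‖lreg g‖ := norm_mul₃_le
      _ ≤ 1 * ‖T‖ * 1 := by gcongr <;> exact norm_lreg_le _
      _ = ‖T‖ := by rw [one_mul, mul_one]

theorem conjState_conj (g k : G) (φ : WeakDual ℂ (RegularOperators G)) (T : RegularOperators G) :
    conjState k φ (lreg g * T * lreg g⁻¹) = conjState (g⁻¹ * k) φ T := by
  simp only [conjState_apply, mul_inv_rev, inv_inv, lreg_mul, mul_assoc]

variable [TopologicalSpace G] [DiscreteTopology G] {φ : WeakDual ℂ (RegularOperators G)}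

theorem averageState_conjState_conj (hψ : ∀ k, conjState k φ ∈ operatorStates (RegularOperators G))
    (m : WeakDual ℝ (G →ᵇ ℝ)) (g : G) (T : RegularOperators G) :
    averageState hψ m (lreg g * T * lreg g⁻¹) = averageState hψ (stateRep G G g⁻¹ m) T := by
  have hshift : ∀ T, realCoefficients hψ (lreg g * T * lreg g⁻¹) =
      (realCoefficients hψ T).compContinuous (translation g⁻¹) := fun T =>
    BoundedContinuousFunction.ext fun k => congrArg Complex.re (conjState_conj g k φ T)
  have hI : Complex.I • (lreg g * T * lreg g⁻¹) = lreg g * (Complex.I • T) * lreg g⁻¹ := by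
    rw [mul_smul_comm, smul_mul_assoc]
  rw [averageState_apply, averageState_apply, hI, hshift, hshift, stateRep_apply, stateRep_apply]

end ConjugateStates

section EquivariantMapsOfMeans

variable {Y : Type u} [TopologicalSpace Y] [CompactSpace Y] [MulAction G Y] [TopologicalSpace G]
  [DiscreteTopology G] {φ : WeakDual ℂ (RegularOperators G)}

/-- The map `C*_λ(G) → C(Y)` that averages the translates `T ↦ φ(λ_g⁻¹ T λ_g)` of a state with
respect to the means `q y`. -/
def ucpOfMean (hφ : φ ∈ operatorStates (RegularOperators G)) {q : C(Y, WeakDual ℝ (G →ᵇ ℝ))}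
    (hq : IsEquivariantMean q) : redCstar G →L[ℂ] C(Y, ℂ) :=
  (mapOfStates
    ⟨fun y => averageState (fun g => conjState_mem_operatorStates g hφ) (q y),
      (continuous_averageState _).comp q.continuous⟩
    fun y => averageState_mem_operatorStates _ (hq.mem_stateSpace y)).comp
  (Subalgebra.toSubmodule (redCstar G).toSubalgebra).subtypeL

variable (hφ : φ ∈ operatorStates (RegularOperators G)) {q : C(Y, WeakDual ℝ (G →ᵇ ℝ))}
  (hq : IsEquivariantMean q)

theorem ucpOfMean_apply (a : redCstar G) (y : Y) : ucpOfMean hφ hq a y =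
    averageState (fun g => conjState_mem_operatorStates g hφ) (q y) (a : RegularOperators G) := rfl

theorem isUCP_ucpOfMean : IsUCP (ucpOfMean hφ hq) :=
  isUCP_iff.2 fun y =>
    have hy := averageState_mem_operatorStates (fun g => conjState_mem_operatorStates g hφ)
      (hq.mem_stateSpace y)
    ⟨hy.1, fun a => hy.2 a⟩

theorem isEquivariant_ucpOfMean : IsEquivariant (ucpOfMean hφ hq) := fun g a y => by
  rw [ucpOfMean_apply, ucpOfMean_apply, hq.map_smul, ← averageState_conjState_conj,
    MulMemClass.coe_mul, MulMemClass.coe_mul, coe_uu, coe_uu]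

end EquivariantMapsOfMeans

section NontrivialStabilizers

variable {Y : Type u} [TopologicalSpace Y] [T2Space Y] [MulAction G Y] [ContinuousConstSMul G Y]

theorem isClopen_fixedBy [ExtremallyDisconnected Y] (s : G) :
    IsClopen (MulAction.fixedBy Y s) :=
  ⟨isClosed_eq (continuous_const_smul s) continuous_id,
    isOpen_fixedPoints (Homeomorph.smul s)⟩

variable [CompactSpace Y]

theorem one_le_re_ucpOfMean_uu [TopologicalSpace G] [DiscreteTopology G] (hY : IsBoundary G Y)
    {q : C(Y, WeakDual ℝ (G →ᵇ ℝ))} (hq : IsEquivariantMean q)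
    {φ : WeakDual ℂ (RegularOperators G)} (hφ : φ ∈ operatorStates (RegularOperators G)) {x : Y}
    (hφx : ∀ t : G, t • x = x → φ (lreg t) = 1) {s : G} (hs : s • x = x) :
    1 ≤ (ucpOfMean hφ hq (uu s) x).re := by
  have := hq.extremallyDisconnected hY
  have hψ := fun g => conjState_mem_operatorStates g hφ
  let h : Y →ᵇ ℝ := 2 • indicator (MulAction.fixedBy Y s) (isClopen_fixedBy s) - 1
  have hle : h.compContinuous (orbitMap x) ≤ realCoefficients hψ (lreg s) := fun g => by
    change 2 • (MulAction.fixedBy Y s).indicator 1 (g • x) - 1 ≤ (conjState g φ (lreg s)).re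
    by_cases hg : g • x ∈ MulAction.fixedBy Y s
    · have hfix : (g⁻¹ * s * g) • x = x := by
        rw [mul_smul, mul_smul, MulAction.mem_fixedBy.1 hg, inv_smul_smul]
      rw [indicator_of_mem hg, conjState_lreg, hφx _ hfix]
      norm_num
    · rw [indicator_of_notMem hg, smul_zero, zero_sub]
      exact neg_le_of_abs_le <| (Complex.abs_re_le_norm _).trans <|
        ((hψ g).2 _).trans (norm_lreg_le s)
  calc 1 = h x := by
        change (1 : ℝ) = 2 • (MulAction.fixedBy Y s).indicator 1 x - 1
        rw [indicator_of_mem (MulAction.mem_fixedBy.2 hs)]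
        norm_num
    _ = q x (h.compContinuous (orbitMap x)) := (hq.apply_comp_orbitMap hY x x h).symm
    _ ≤ q x (realCoefficients hψ (lreg s)) := state_mono (hq.mem_stateSpace x) hle
    _ = (ucpOfMean hφ hq (uu s) x).re := by
        rw [ucpOfMean_apply, re_averageState, coe_uu]

theorem eq_one_of_forall_ucp_eq_tauF (hY : IsFurstenberg G Y)
    (hunique : ∀ Φ : redCstar G →L[ℂ] C(Y, ℂ), IsUCP Φ → IsEquivariant Φ →
      ∀ (a : redCstar G) (x : Y), Φ a x = tauF G a) {s : G} {x : Y} (hs : s • x = x) : s = 1 := by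
  let : TopologicalSpace G := ⊥
  have : DiscreteTopology G := ⟨rfl⟩
  by_contra hne
  obtain ⟨q, hq⟩ := hY.exists_isEquivariantMean
  obtain ⟨φ, hφ, hφ_stab⟩ := exists_operatorState_lreg_eq_one (hq.mem_stateSpace x)
  have hφx : ∀ t : G, t • x = x → φ (lreg t) = 1 := fun t ht =>
    hφ_stab t (by rw [← hq.map_smul, ht])
  have hre := one_le_re_ucpOfMean_uu hY.1 hq hφ hφx hs
  rw [hunique _ (isUCP_ucpOfMean hφ hq) (isEquivariant_ucpOfMean hφ hq), tauF_uu hne] at hre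
  exact not_le_of_gt one_pos hre

end NontrivialStabilizers

section MultiplicativeDomain

variable {A : Type*} [CStarAlgebra A] {φ : WeakDual ℂ A} {a : A}

theorem operatorState_mul_eq_zero (hφ : φ ∈ operatorStates A) (ha : IsSelfAdjoint a)
    (hzero : (φ (a * a)).re = 0) (b : A) : φ (a * b) = 0 ∧ φ (b * a) = 0 := by
  constructor <;> refine norm_le_zero_iff.1 ?_
  · simpa only [ha.star_eq, hzero, Real.sqrt_zero, zero_mul] using
      norm_operatorState_star_mul_le hφ a b
  · simpa only [ha.star_eq, hzero, Real.sqrt_zero, mul_zero, star_star] using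
      norm_operatorState_star_mul_le hφ (star b) a

theorem operatorState_mul (hφ : φ ∈ operatorStates A) (ha : IsSelfAdjoint a)
    (hsq : (φ (a * a)).re = (φ a).re ^ 2) (b : A) :
    φ (a * b) = (φ a).re * φ b ∧ φ (b * a) = φ b * (φ a).re := by
  let r : ℝ := (φ a).re
  have hr : IsSelfAdjoint (a - algebraMap ℂ A r) :=
    ha.sub (.algebraMap A (Complex.conj_ofReal r))
  have hexpand : ∀ x : A, φ (algebraMap ℂ A r * x) = r * φ x ∧
      φ (x * algebraMap ℂ A r) = φ x * r := fun x => by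
    rw [← Algebra.commutes, ← Algebra.smul_def, map_smul, smul_eq_mul, mul_comm (φ x)]
    exact ⟨rfl, rfl⟩
  have hφ_r : φ (algebraMap ℂ A r) = r := by
    rw [Algebra.algebraMap_eq_smul_one, map_smul, hφ.1, smul_eq_mul, mul_one]
  have hzero : (φ ((a - algebraMap ℂ A r) * (a - algebraMap ℂ A r))).re = 0 := by
    rw [sub_mul, mul_sub, map_sub, map_sub, (hexpand a).2, (hexpand _).1, map_sub, hφ_r,
      Complex.sub_re, Complex.sub_re, hsq]
    simp only [Complex.re_ofReal_mul, Complex.re_mul_ofReal, Complex.sub_re, Complex.ofReal_re]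
    ring
  obtain ⟨hleft, hright⟩ := operatorState_mul_eq_zero hφ hr hzero b
  rw [sub_mul, map_sub, (hexpand b).1, sub_eq_zero] at hleft
  rw [mul_sub, map_sub, (hexpand b).2, sub_eq_zero] at hright
  exact ⟨hleft, hright⟩

end MultiplicativeDomain

section MultiplicationOperators

variable {S : Type*} [TopologicalSpace S]

/-- The multiplication operator `ξ ↦ f ξ` on `ℓ²(S)`. -/
def mulOperator (f : S →ᵇ ℝ) : ℓ²(S, ℂ) →L[ℂ] ℓ²(S, ℂ) :=
  lp.mapCLM 2 (fun s => (f s : ℂ) • ContinuousLinearMap.id ℂ ℂ) (norm_nonneg f) fun s =>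
    ContinuousLinearMap.opNorm_le_bound _ (norm_nonneg f) fun z => by
      rw [_root_.smul_apply, norm_smul, Complex.norm_real]
      exact mul_le_mul_of_nonneg_right (f.norm_coe_le_norm s) (norm_nonneg z)

theorem mulOperator_apply (f : S →ᵇ ℝ) (ξ : ℓ²(S, ℂ)) (s : S) :
    mulOperator f ξ s = f s * ξ s := rfl

theorem norm_mulOperator_le (f : S →ᵇ ℝ) : ‖mulOperator f‖ ≤ ‖f‖ :=
  lp.norm_mapCLM_le ..

theorem mulOperator_one : mulOperator (1 : S →ᵇ ℝ) = 1 := by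
  ext ξ s
  exact (congrArg (· * ξ s) Complex.ofReal_one).trans (one_mul _)

theorem mulOperator_mul (f h : S →ᵇ ℝ) : mulOperator (f * h) = mulOperator f * mulOperator h := by
  ext ξ s
  exact (congrArg (· * ξ s) (Complex.ofReal_mul _ _)).trans (mul_assoc _ _ _)

theorem isSelfAdjoint_mulOperator (f : S →ᵇ ℝ) : IsSelfAdjoint (mulOperator f) := by
  rw [ContinuousLinearMap.isSelfAdjoint_iff_isSymmetric]
  intro ξ η
  rw [lp.inner_eq_tsum, lp.inner_eq_tsum]
  congr with s
  change inner ℂ ((f s : ℂ) * ξ s) (η s) = inner ℂ (ξ s) ((f s : ℂ) * η s)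
  rw [← smul_eq_mul, ← smul_eq_mul, inner_smul_left, inner_smul_right, Complex.conj_ofReal]

/-- The state `f ↦ Re φ(M_f)` on `C_b(S)` obtained from a state `φ` by restriction to the
multiplication operators. -/
def restrictToFunctions (φ : WeakDual ℂ (ℓ²(S, ℂ) →L[ℂ] ℓ²(S, ℂ))) : WeakDual ℝ (S →ᵇ ℝ) :=
  StrongDual.toWeakDual <| LinearMap.mkContinuous
    { toFun f := (φ (mulOperator f)).re
      map_add' f h := by
        rw [← Complex.add_re, ← map_add]
        congr 2
        ext ξ s
        exact (congrArg (· * ξ s) (Complex.ofReal_add _ _)).trans (add_mul _ _ _)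
      map_smul' c f := by
        have hsmul : mulOperator (c • f) = (c : ℂ) • mulOperator f := by
          ext ξ s
          exact (congrArg (· * ξ s) (Complex.ofReal_mul _ _)).trans (mul_assoc _ _ _)
        rw [hsmul, map_smul, smul_eq_mul, Complex.re_ofReal_mul]
        rfl }
    ‖WeakDual.toStrongDual φ‖ fun f => (Complex.abs_re_le_norm _).trans <|
      ((WeakDual.toStrongDual φ).le_opNorm _).trans <| by
        gcongr
        exact norm_mulOperator_le f

theorem restrictToFunctions_apply (φ : WeakDual ℂ (ℓ²(S, ℂ) →L[ℂ] ℓ²(S, ℂ))) (f : S →ᵇ ℝ) :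
    restrictToFunctions φ f = (φ (mulOperator f)).re := rfl

theorem continuous_restrictToFunctions :
    Continuous (restrictToFunctions (S := S)) :=
  WeakDual.continuous_of_continuous_eval fun f =>
    Complex.continuous_re.comp (WeakDual.eval_continuous (mulOperator f))

theorem restrictToFunctions_mem_stateSpace {φ : WeakDual ℂ (ℓ²(S, ℂ) →L[ℂ] ℓ²(S, ℂ))}
    (hφ : φ ∈ operatorStates _) : restrictToFunctions φ ∈ stateSpace S := by
  have hone : restrictToFunctions φ 1 = 1 := by
    rw [restrictToFunctions_apply, mulOperator_one, hφ.1, Complex.one_re]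
  refine ⟨hone, fun f hf => ?_⟩
  have hnorm : ‖‖f‖ • (1 : S →ᵇ ℝ) - f‖ ≤ ‖f‖ := (norm_le (norm_nonneg f)).2 fun s => by
    change |‖f‖ * 1 - f s| ≤ ‖f‖
    rw [mul_one, abs_of_nonneg (sub_nonneg.2 (f.apply_le_norm s))]
    exact sub_le_self _ (hf s)
  have hle : restrictToFunctions φ (‖f‖ • (1 : S →ᵇ ℝ) - f) ≤ ‖f‖ :=
    (Complex.re_le_norm _).trans <| (hφ.2 _).trans <| (norm_mulOperator_le _).trans hnorm
  rw [map_sub, map_smul, hone, smul_eq_mul, mul_one] at hle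
  exact sub_le_self_iff _ |>.1 hle

end MultiplicationOperators

section FreeBoundaryActions

theorem mulOperator_mul_lreg [TopologicalSpace G] [DiscreteTopology G] (f : G →ᵇ ℝ) (g : G) :
    mulOperator f * lreg g = lreg g * mulOperator (f.compContinuous (translation g)) := by
  ext ξ k
  change f k * lreg g ξ k = lreg g (mulOperator (f.compContinuous (translation g)) ξ) k
  rw [lreg_apply, lreg_apply, mulOperator_apply]
  change f k * ξ (g⁻¹ * k) = f (g * (g⁻¹ * k)) * ξ (g⁻¹ * k)
  rw [mul_inv_cancel_left]

theorem restrictToFunctions_conjState [TopologicalSpace G] [DiscreteTopology G] (g : G)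
    (φ : WeakDual ℂ (RegularOperators G)) :
    restrictToFunctions (conjState g φ) = stateRep G G g (restrictToFunctions φ) :=
  DFunLike.ext _ _ fun f => by
    rw [stateRep_apply, restrictToFunctions_apply, restrictToFunctions_apply, conjState_apply,
      mul_assoc, mulOperator_mul_lreg, ← mul_assoc, ← lreg_mul, inv_mul_cancel, lreg_one, one_mul]

variable {Y : Type u} [TopologicalSpace Y]

theorem isCompact_extensions [CompactSpace Y] (Φ : redCstar G →L[ℂ] C(Y, ℂ)) :
    IsCompact {p : WeakDual ℂ (RegularOperators G) × Y |
      p.1 ∈ operatorStates (RegularOperators G) ∧ ∀ a : redCstar G, p.1 a = Φ a p.2} := by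
  simp only [ofPred_and, ofPred_forall]
  have hstates :=
    (isCompact_operatorStates (A := RegularOperators G)).prod (isCompact_univ (X := Y))
  rw [prod_univ] at hstates
  exact hstates.inter_right <| isClosed_iInter fun a =>
    isClosed_eq ((WeakDual.eval_continuous (a : RegularOperators G)).comp continuous_fst)
      ((Φ a).continuous.comp continuous_snd)

variable [MulAction G Y] {Φ : redCstar G →L[ℂ] C(Y, ℂ)} {φ : WeakDual ℂ (RegularOperators G)}

theorem IsEquivariant.conjState_eq_eval (hΦ : IsEquivariant Φ) {z : Y}
    (hφ : ∀ a : redCstar G, φ a = Φ a z) (g : G) (a : redCstar G) :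
    conjState g φ a = Φ a (g • z) := by
  rw [conjState_apply, ← coe_uu, ← coe_uu, ← MulMemClass.coe_mul, ← MulMemClass.coe_mul, hφ]
  simpa only [inv_inv] using hΦ g⁻¹ a z

variable [CompactSpace Y] [T2Space Y] [ContinuousConstSMul G Y]

-- Such a state is multiplicative on the multiplication operators by functions on `Y`, and `λ_s`
-- intertwines evaluation at `w` with evaluation at `s • w`.
theorem operatorState_lreg_eq_zero [TopologicalSpace G] [DiscreteTopology G]
    (hφ : φ ∈ operatorStates (RegularOperators G)) {w : Y}
    (hφw : pushforward (orbitMap w) (restrictToFunctions φ) = diracState w) {s : G}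
    (hs : s • w ≠ w) : φ (lreg s) = 0 := by
  let M : (Y →ᵇ ℝ) → RegularOperators G := fun f => mulOperator (f.compContinuous (orbitMap w))
  have heval : ∀ f, (φ (M f)).re = f w := fun f => DFunLike.congr_fun hφw f
  have hmul : ∀ f T, φ (M f * T) = f w * φ T ∧ φ (T * M f) = φ T * f w := fun f T => by
    rw [← heval f]
    refine operatorState_mul hφ (isSelfAdjoint_mulOperator _) ?_ T
    rw [← mulOperator_mul, heval, sq]
    exact heval (f * f)
  obtain ⟨f, hf0, hf1, -⟩ := exists_bounded_zero_one_of_closed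
    (isClosed_singleton (x := s • w)) (isClosed_singleton (x := w)) (disjoint_singleton.2 hs)
  have hshift : M f * lreg s = lreg s * M (f.compContinuous (translation s)) := by
    rw [mulOperator_mul_lreg]
    congr 2
    exact BoundedContinuousFunction.ext fun k => congrArg f (mul_smul s k w)
  calc φ (lreg s) = φ (M f * lreg s) := by
        rw [(hmul f _).1, hf1 rfl, Pi.one_apply, Complex.ofReal_one, one_mul]
    _ = φ (lreg s) * f (s • w) := by
        rw [hshift, (hmul _ _).2]
        rfl
    _ = 0 := by rw [hf0 rfl, Pi.zero_apply, Complex.ofReal_zero, mul_zero]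

theorem exists_extension_restricting_to_dirac [TopologicalSpace G] [DiscreteTopology G]
    (hY : IsBoundary G Y) (hΦ : IsUCP Φ) (hequiv : IsEquivariant Φ) (w : Y) :
    ∃ φ ∈ operatorStates (RegularOperators G),
      pushforward (orbitMap w) (restrictToFunctions φ) = diracState w ∧
      ∃ z, ∀ a : redCstar G, φ a = Φ a z := by
  obtain ⟨ψ, hψ, hψΦ⟩ := exists_operatorState_extension (isUCP_iff.1 hΦ w)
  let L : WeakDual ℂ (RegularOperators G) × Y → WeakDual ℝ (Y →ᵇ ℝ) := fun p =>
    pushforward (orbitMap w) (restrictToFunctions p.1)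
  have hL : Continuous L := (pushforward (orbitMap w)).continuous.comp
    (continuous_restrictToFunctions.comp continuous_fst)
  have hθ : L (ψ, w) ∈ stateSpace Y :=
    pushforward_mem_stateSpace _ (restrictToFunctions_mem_stateSpace hψ)
  have horbit : range (fun g => stateRep G Y g (L (ψ, w))) ⊆ L '' {p | p.1 ∈
      operatorStates (RegularOperators G) ∧ ∀ a : redCstar G, p.1 a = Φ a p.2} :=
    range_subset_iff.2 fun g => ⟨(conjState g ψ, g • w),
      ⟨conjState_mem_operatorStates g hψ, hequiv.conjState_eq_eval hψΦ g⟩, by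
        simp only [L, restrictToFunctions_conjState, pushforward_orbitMap_stateRep]⟩
  obtain ⟨⟨φ, z⟩, ⟨hφ, hφΦ⟩, hφw⟩ := closure_minimal horbit
    ((isCompact_extensions Φ).image hL).isClosed (diracState_mem_closure_orbit hY hθ w)
  exact ⟨φ, hφ, hφw, z, hφΦ⟩

theorem apply_uu_eq_zero_of_trivial_stabilizer (hY : IsBoundary G Y) {w : Y}
    (hw : ∀ s : G, s • w = w → s = 1) (hΦ : IsUCP Φ) (hequiv : IsEquivariant Φ) {s : G}
    (hs : s ≠ 1) : Φ (uu s) = 0 := by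
  let : TopologicalSpace G := ⊥
  have : DiscreteTopology G := ⟨rfl⟩
  have := isMinimal_of_isBoundary hY
  obtain ⟨φ, hφ, hφw, z, hφΦ⟩ := exists_extension_restricting_to_dirac hY hΦ hequiv w
  refine DFunLike.coe_injective <| Continuous.ext_on (MulAction.dense_orbit G z)
    (Φ (uu s)).continuous continuous_zero ?_
  rintro _ ⟨g, rfl⟩
  have hne : g⁻¹ * s * g ≠ 1 := by
    simpa only [inv_inv] using (conj_eq_one_iff (a := g⁻¹)).not.2 hs
  calc Φ (uu s) (g • z) = conjState g φ (uu s : RegularOperators G) :=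
        (hequiv.conjState_eq_eval hφΦ g _).symm
    _ = φ (lreg (g⁻¹ * s * g)) := by rw [coe_uu, conjState_lreg]
    _ = 0 := operatorState_lreg_eq_zero hφ hφw fun h => hne (hw _ h)

theorem ucp_eq_tauF_of_trivial_stabilizer (hY : IsBoundary G Y) {w : Y}
    (hw : ∀ s : G, s • w = w → s = 1) (hΦ : IsUCP Φ) (hequiv : IsEquivariant Φ) (a : redCstar G)
    (x : Y) : Φ a x = tauF G a :=
  eq_tauF_of_uu (F := (ContinuousMap.evalCLM ℂ x).comp Φ) (DFunLike.congr_fun hΦ.1 x)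
    (fun _ hs =>
      DFunLike.congr_fun (apply_uu_eq_zero_of_trivial_stabilizer hY hw hΦ hequiv hs) x) a

end FreeBoundaryActions

/-- The action of a discrete group on its Furstenberg boundary is free if and only if the only
`G`-equivariant u.c.p. map `C*_λ(G) → C(∂_F G)` is the one given by the canonical trace. -/
theorem free_boundary_action_iff_unique_equivariant_ucp (G : Type u) [Group G] (Y : Type u)
    [TopologicalSpace Y] [CompactSpace Y] [T2Space Y] [MulAction G Y] [ContinuousConstSMul G Y]
    (hY : IsFurstenberg G Y) :
    (∀ (s : G) (x : Y), s • x = x → s = 1) ↔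
      ∀ Φ : redCstar G →L[ℂ] C(Y, ℂ), IsUCP Φ → IsEquivariant Φ →
        ∀ (a : redCstar G) (x : Y), Φ a x = tauF G a := by
  refine ⟨fun hfree Φ hΦ hequiv a x => ?_, fun hunique s x hs =>
    eq_one_of_forall_ucp_eq_tauF hY hunique hs⟩
  exact ucp_eq_tauF_of_trivial_stabilizer hY.1 (hfree · x) hΦ hequiv a x
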